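/- arXiv:math/9805081 — 3 statements merged into one kernel-verified Lean document; each statement's English description precedes it below -/
import Mathlib

section
/- Let g, h : (0,∞) → [0,ω₁) be left-continuous non-increasing functions whose ranges are finite sets of ordinals, such that there exists A < ∞ with g(t) = h(t) = 0 for all t > A, and g(t) ≤ h(t) for all t. Let ε > 0 and let γ be an ordinal with 0 < γ ≤ g(ε). If G and H are the non-increasing left-continuous rearrangements of g − γ·1_{(0,ε]} and h − γ·1_{(0,ε]} respectively, then G(t) ≤ H(t) for all t > 0, and λ({t : g(t)+1 ≤ h(t)}) ≤ λ({t : G(t)+1 ≤ H(t)}). -/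
open MeasureTheory Set Ordinal Filter
open scoped Classical

/-- `g` is non-increasing on `(0,∞)`. -/
def NonIncr (g : ℝ → Ordinal) : Prop := ∀ s t : ℝ, 0 < s → s ≤ t → g t ≤ g s

/-- `g` is left continuous on `(0,∞)`; for non-increasing ordinal-valued
functions this is equivalent to being locally constant from the left. -/
def LeftCont (g : ℝ → Ordinal) : Prop :=
  ∀ t : ℝ, 0 < t → ∃ δ > 0, ∀ s : ℝ, t - δ < s → s ≤ t → g s = g t

/-- `g` has finite range on `(0,∞)`. -/
def FiniteRange (g : ℝ → Ordinal) : Prop := (g '' Set.Ioi (0:ℝ)).Finite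

/-- `g` takes values in `[0,ω₁)`, the countable ordinals. -/
def CountableValued (g : ℝ → Ordinal) : Prop := ∀ t : ℝ, 0 < t → g t < ω₁

/-- `g` vanishes beyond `A`. -/
def VanishesBeyond (g : ℝ → Ordinal) (A : ℝ) : Prop := ∀ t : ℝ, A < t → g t = 0

/-- The level set `{t ∈ (0,∞) : g t = α}`. -/
def lev (g : ℝ → Ordinal) (α : Ordinal) : Set ℝ := {t | 0 < t ∧ g t = α}

/-- `G` is the non-increasing left-continuous rearrangement of `u`: it is
non-increasing, left continuous, and each nonzero level set has the same
Lebesgue measure as that of `u`. -/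
def IsRearrangement (G u : ℝ → Ordinal) : Prop :=
  NonIncr G ∧ LeftCont G ∧ ∀ α : Ordinal, 0 < α → volume (lev G α) = volume (lev u α)

/-- The function `g − γ·1_I` (pointwise ordinal subtraction on `I`). -/
noncomputable def subInd (g : ℝ → Ordinal) (γ : Ordinal) (I : Set ℝ) : ℝ → Ordinal :=
  fun t => if t ∈ I then g t - γ else g t

/-!
Write `u ≤ v` for the two functions being rearranged. The measures of the superlevel sets
`{u ≥ α}`, `α > 0`, survive rearrangement and determine the rearranged function pointwise, which
gives `G ≤ H`. For the second claim it suffices to compare `{v = α} \ {u = α}` with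
`{H = α} \ {G = α}` for each `α > 0`. Either `{G = α}` and `{H = α}` are disjoint, and the second
set is all of `{H = α}`; or they meet, and monotonicity of `G` and `H` forces `{H > α} ⊆ {G ≥ α}`,
so that `{H ≥ α} \ {G ≥ α} ⊆ {H = α} \ {G = α}`, whereas always
`{v = α} \ {u = α} ⊆ {v ≥ α} \ {u ≥ α}`.

Adding up over `α` needs only countable additivity, since a non-increasing function from a subset
of `ℝ` to a well-order takes countably many values.
-/

/-- The superlevel set `{t ∈ (0,∞) : α ≤ u t}`. -/
def superlev (u : ℝ → Ordinal) (α : Ordinal) : Set ℝ := {t | 0 < t ∧ α ≤ u t}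

/-- `u` is a countably-valued simple function on `(0,∞)`: it takes countably many values there, each
on a measurable set, so that measures can be computed by summing over the level sets of `u`. -/
structure IsCountablySimple (u : ℝ → Ordinal) : Prop where
  countable_image : (u '' Ioi 0).Countable
  measurableSet_lev : ∀ α, MeasurableSet (lev u α)

section CountableRange

variable {α β : Type*} [LinearOrder α] [TopologicalSpace α] [OrderTopology α]
  [SecondCountableTopology α] [LinearOrder β] [WellFoundedLT β]

theorem countable_image_of_antitoneOn {f : α → β} {s : Set α} (hf : AntitoneOn f s) :
    (f '' s).Countable := by
  rcases s.eq_empty_or_nonempty with rfl | ⟨a, -⟩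
  · simp
  have : Nonempty α := ⟨a⟩
  have hσ : ∀ b ∈ f '' s, ∃ a ∈ s, f a = b := fun _ hb => hb
  choose! σ hσ_mem hσ_eq using hσ
  have hσ_lt : ∀ b ∈ f '' s, ∀ c ∈ f '' s, b < c → σ c < σ b := by
    intro b hb c hc hbc
    rw [← hσ_eq b hb, ← hσ_eq c hc] at hbc
    exact hf.reflect_lt (hσ_mem b hb) (hσ_mem c hc) hbc
  have hmax : {b ∈ f '' s | ∀ c ∈ f '' s, c ≤ b}.Countable :=
    Set.Subsingleton.countable fun b hb c hc => le_antisymm (hc.2 b hb.1) (hb.2 c hc.1)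
  -- A non-maximal value has a successor in the range, so the section `σ` jumps there; a map into a
  -- second countable order jumps at only countably many points.
  refine (hmax.union (countable_image_gt_image_Ioi_within (f '' s) σ)).mono fun b hb => ?_
  by_cases hb_max : ∀ c ∈ f '' s, c ≤ b
  · exact Or.inl ⟨hb, hb_max⟩
  push Not at hb_max
  obtain ⟨c, ⟨hc, hbc⟩, hc_min⟩ :=
    WellFounded.has_min (wellFounded_lt (α := β)) {c | c ∈ f '' s ∧ b < c} hb_max
  refine Or.inr ⟨hb, σ c, hσ_lt b hb c hc hbc, fun y hy hby => ?_⟩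
  rcases (not_lt.mp (hc_min y ⟨hy, hby⟩)).eq_or_lt with rfl | hcy
  · exact le_rfl
  · exact (hσ_lt c hc y hy hcy).le

end CountableRange

section Simple

variable {g u v : ℝ → Ordinal} {α : Ordinal}

theorem NonIncr.ordConnected_lev (hg : NonIncr g) (α : Ordinal) : (lev g α).OrdConnected := by
  refine ⟨?_⟩
  rintro x ⟨hx, rfl⟩ y ⟨-, hy⟩ z ⟨hxz, hzy⟩
  have hz : 0 < z := hx.trans_le hxz
  exact ⟨hz, le_antisymm (hg x z hx hxz) (hy ▸ hg z y hz hzy)⟩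

theorem NonIncr.isCountablySimple (hg : NonIncr g) : IsCountablySimple g where
  countable_image := countable_image_of_antitoneOn fun s hs t _ hst => hg s t hs hst
  measurableSet_lev α := (hg.ordConnected_lev α).measurableSet

theorem IsCountablySimple.measurableSet_setOf (hu : IsCountablySimple u) (P : Ordinal → Prop) :
    MeasurableSet {t | 0 < t ∧ P (u t)} := by
  have hunion : {t | 0 < t ∧ P (u t)} = ⋃ α ∈ {α ∈ u '' Ioi 0 | P α}, lev u α := by
    ext t
    simp only [lev, mem_ofPred_eq, mem_iUnion, exists_prop]
    constructor
    · rintro ⟨ht, hP⟩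
      exact ⟨u t, ⟨⟨t, ht, rfl⟩, hP⟩, ht, rfl⟩
    · rintro ⟨_, ⟨-, hP⟩, ht, rfl⟩
      exact ⟨ht, hP⟩
  rw [hunion]
  exact MeasurableSet.biUnion (hu.countable_image.mono fun _ hα => hα.1)
    fun α _ => hu.measurableSet_lev α

theorem isCountablySimple_subInd {I : Set ℝ} (hu : IsCountablySimple u) (γ : Ordinal)
    (hI : MeasurableSet I) : IsCountablySimple (subInd u γ I) where
  countable_image := by
    refine ((hu.countable_image.image (· - γ)).union hu.countable_image).mono ?_
    rintro _ ⟨t, ht, rfl⟩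
    by_cases htI : t ∈ I
    · exact Or.inl ⟨u t, ⟨t, ht, rfl⟩, (if_pos htI).symm⟩
    · exact Or.inr ⟨t, ht, (if_neg htI).symm⟩
  measurableSet_lev α := by
    have hlev : lev (subInd u γ I) α =
        I.ite {t | 0 < t ∧ u t - γ = α} {t | 0 < t ∧ u t = α} := by
      ext t
      by_cases htI : t ∈ I <;> simp [lev, subInd, Set.ite, htI]
    rw [hlev]
    exact hI.ite (hu.measurableSet_setOf (· - γ = α)) (hu.measurableSet_setOf (· = α))

theorem volume_le_of_forall_lev {S T : Set ℝ} (hu : (u '' Ioi 0).Countable)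
    (hv : ∀ α, MeasurableSet (lev v α)) (hS : S ⊆ Ioi 0)
    (hST : ∀ α, volume (S ∩ lev u α) ≤ volume (T ∩ lev v α)) : volume S ≤ volume T := by
  have hcover : S ⊆ ⋃ α ∈ u '' Ioi 0, S ∩ lev u α := fun t ht =>
    mem_biUnion (mem_image_of_mem u (hS ht)) ⟨ht, hS ht, rfl⟩
  have hdisj : (u '' Ioi 0).PairwiseDisjoint (lev v) := fun α _ β _ hαβ =>
    Set.disjoint_left.mpr fun _ hα hβ => hαβ (hα.2.symm.trans hβ.2)
  calc volume S
      ≤ volume (⋃ α ∈ u '' Ioi 0, S ∩ lev u α) := measure_mono hcover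
    _ ≤ ∑' α : u '' Ioi 0, volume (S ∩ lev u α) := measure_biUnion_le volume hu _
    _ ≤ ∑' α : u '' Ioi 0, volume (T ∩ lev v α) := ENNReal.tsum_le_tsum fun α => hST α
    _ = ∑' α : u '' Ioi 0, volume.restrict T (lev v α) := by
      simp only [Measure.restrict_apply (hv _), inter_comm]
    _ = volume.restrict T (⋃ α ∈ u '' Ioi 0, lev v α) :=
      (measure_biUnion hu hdisj fun α _ => hv α).symm
    _ ≤ volume T := (measure_mono (subset_univ _)).trans_eq (Measure.restrict_apply_univ T)

theorem volume_superlev_le_of_forall_lev (hu : (u '' Ioi 0).Countable)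
    (hv : ∀ β, MeasurableSet (lev v β)) (huv : ∀ β, 0 < β → volume (lev u β) ≤ volume (lev v β))
    (hα : 0 < α) : volume (superlev u α) ≤ volume (superlev v α) := by
  refine volume_le_of_forall_lev hu hv (fun t ht => ht.1) fun β => ?_
  by_cases hαβ : α ≤ β
  · have hsub : lev v β ⊆ superlev v α := fun t ht => ⟨ht.1, hαβ.trans_eq ht.2.symm⟩
    rw [inter_eq_right.mpr hsub]
    exact (measure_mono inter_subset_right).trans (huv β (hα.trans_le hαβ))
  · have hempty : superlev u α ∩ lev u β = ∅ :=
      eq_empty_of_forall_notMem fun t ht => hαβ (ht.1.2.trans_eq ht.2.2)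
    simp [hempty]

end Simple

section Rearrangement

variable {u v G H : ℝ → Ordinal} {α : Ordinal} {t : ℝ}

theorem IsRearrangement.volume_superlev (hG : IsRearrangement G u) (hu : IsCountablySimple u)
    (hα : 0 < α) : volume (superlev G α) = volume (superlev u α) :=
  have hG_simple := hG.1.isCountablySimple
  le_antisymm
    (volume_superlev_le_of_forall_lev hG_simple.countable_image hu.measurableSet_lev
      (fun β hβ => (hG.2.2 β hβ).le) hα)
    (volume_superlev_le_of_forall_lev hu.countable_image hG_simple.measurableSet_lev
      (fun β hβ => (hG.2.2 β hβ).ge) hα)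

theorem NonIncr.le_apply_iff_ofReal_le_volume_superlev (hG : NonIncr G) (hG_left : LeftCont G)
    (ht : 0 < t) : α ≤ G t ↔ ENNReal.ofReal t ≤ volume (superlev G α) := by
  have hIoc (x : ℝ) : volume (Ioc 0 x) = ENNReal.ofReal x := by simp
  constructor
  · intro hα
    rw [← hIoc]
    exact measure_mono fun s hs => ⟨hs.1, hα.trans (hG s t hs.1 hs.2)⟩
  · contrapose!
    intro hα
    obtain ⟨δ, hδ, hconst⟩ := hG_left t ht
    have hsub : superlev G α ⊆ Ioc 0 (t - δ) := by
      rintro s ⟨hs, hαs⟩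
      refine ⟨hs, not_lt.mp fun hts => (hαs.trans ?_).not_gt hα⟩
      rcases le_total s t with hst | hst
      · exact (hconst s hts hst).le
      · exact hG t s ht hst
    calc volume (superlev G α) ≤ ENNReal.ofReal (t - δ) :=
          (measure_mono hsub).trans_eq (hIoc _)
      _ < ENNReal.ofReal t := (ENNReal.ofReal_lt_ofReal_iff ht).mpr (by linarith)

theorem IsRearrangement.apply_le_apply (hG : IsRearrangement G u) (hH : IsRearrangement H v)
    (hu : IsCountablySimple u) (hv : IsCountablySimple v) (huv : ∀ s, 0 < s → u s ≤ v s)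
    (ht : 0 < t) : G t ≤ H t := by
  rcases eq_zero_or_pos (G t) with h0 | hpos
  · exact h0 ▸ zero_le
  refine (hH.1.le_apply_iff_ofReal_le_volume_superlev hH.2.1 ht).mpr ?_
  calc ENNReal.ofReal t
      ≤ volume (superlev G (G t)) :=
        (hG.1.le_apply_iff_ofReal_le_volume_superlev hG.2.1 ht).mp le_rfl
    _ = volume (superlev u (G t)) := hG.volume_superlev hu hpos
    _ ≤ volume (superlev v (G t)) := measure_mono fun s hs => ⟨hs.1, hs.2.trans (huv s hs.1)⟩
    _ = volume (superlev H (G t)) := (hH.volume_superlev hv hpos).symm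

theorem lev_diff_subset_superlev_diff (huv : ∀ s, 0 < s → u s ≤ v s) (α : Ordinal) :
    lev v α \ lev u α ⊆ superlev v α \ superlev u α := fun s hs =>
  ⟨⟨hs.1.1, hs.1.2.ge⟩, fun hsu =>
    hs.2 ⟨hs.1.1, le_antisymm ((huv s hs.1.1).trans_eq hs.1.2) hsu.2⟩⟩

theorem superlev_diff_subset_lev_diff (hG : NonIncr G) (hH : NonIncr H)
    (hne : (lev G α ∩ lev H α).Nonempty) :
    superlev H α \ superlev G α ⊆ lev H α \ lev G α := by
  obtain ⟨t, ⟨ht, hGt⟩, -, hHt⟩ := hne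
  rintro s ⟨⟨hs, hHs⟩, hGs⟩
  refine ⟨⟨hs, le_antisymm ?_ hHs⟩, fun hlev => hGs ⟨hs, hlev.2.ge⟩⟩
  rcases le_total s t with hst | hts
  · exact absurd ⟨hs, hGt.ge.trans (hG s t hs hst)⟩ hGs
  · exact (hH t s ht hts).trans_eq hHt

theorem IsRearrangement.volume_lev_diff_le (hG : IsRearrangement G u) (hH : IsRearrangement H v)
    (hu : IsCountablySimple u) (hv : IsCountablySimple v) (huv : ∀ s, 0 < s → u s ≤ v s)
    (hα : 0 < α) (hfin : volume (superlev u α) ≠ ⊤) :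
    volume (lev v α \ lev u α) ≤ volume (lev H α \ lev G α) := by
  rcases (lev G α ∩ lev H α).eq_empty_or_nonempty with hempty | hne
  · have hdisj : Disjoint (lev H α) (lev G α) := (disjoint_iff_inter_eq_empty.mpr hempty).symm
    rw [hdisj.sdiff_eq_left, hH.2.2 α hα]
    exact measure_mono sdiff_subset
  · have hsub : superlev u α ⊆ superlev v α := fun s hs => ⟨hs.1, hs.2.trans (huv s hs.1)⟩
    have hmeas : MeasurableSet (superlev u α) := hu.measurableSet_setOf (α ≤ ·)
    calc volume (lev v α \ lev u α)
        ≤ volume (superlev v α \ superlev u α) :=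
          measure_mono (lev_diff_subset_superlev_diff huv α)
      _ = volume (superlev v α) - volume (superlev u α) :=
          measure_sdiff hsub hmeas.nullMeasurableSet hfin
      _ = volume (superlev H α) - volume (superlev G α) := by
          rw [hG.volume_superlev hu hα, hH.volume_superlev hv hα]
      _ ≤ volume (superlev H α \ superlev G α) := le_measure_sdiff
      _ ≤ volume (lev H α \ lev G α) :=
          measure_mono (superlev_diff_subset_lev_diff hG.1 hH.1 hne)

theorem IsRearrangement.volume_setOf_lt_le (hG : IsRearrangement G u) (hH : IsRearrangement H v)
    (hu : IsCountablySimple u) (hv : IsCountablySimple v) (huv : ∀ s, 0 < s → u s ≤ v s)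
    (hfin : volume {s | 0 < s ∧ u s ≠ 0} ≠ ⊤) :
    volume {s | 0 < s ∧ u s < v s} ≤ volume {s | 0 < s ∧ G s < H s} := by
  refine volume_le_of_forall_lev hv.countable_image hH.1.isCountablySimple.measurableSet_lev
    (fun s hs => hs.1) fun α => ?_
  have hleft : {s | 0 < s ∧ u s < v s} ∩ lev v α ⊆ lev v α \ lev u α := fun s hs =>
    ⟨hs.2, fun hsu => hs.1.2.ne (hsu.2.trans hs.2.2.symm)⟩
  have hright : lev H α \ lev G α ⊆ {s | 0 < s ∧ G s < H s} ∩ lev H α := fun s hs =>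
    ⟨⟨hs.1.1, (hG.apply_le_apply hH hu hv huv hs.1.1).lt_of_ne
      fun heq => hs.2 ⟨hs.1.1, heq.trans hs.1.2⟩⟩, hs.1⟩
  rcases eq_zero_or_pos α with rfl | hα
  · have hempty : {s | 0 < s ∧ u s < v s} ∩ lev v 0 = ∅ :=
      eq_empty_of_forall_notMem fun s hs => not_lt_zero (hs.1.2.trans_eq hs.2.2)
    simp [hempty]
  · have hfinα : volume (superlev u α) ≠ ⊤ :=
      ne_top_of_le_ne_top hfin (measure_mono fun s hs => ⟨hs.1, (hα.trans_le hs.2).ne'⟩)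
    exact (measure_mono hleft).trans
      ((hG.volume_lev_diff_le hH hu hv huv hα hfinα).trans (measure_mono hright))

end Rearrangement

section SubInd

variable {g h : ℝ → Ordinal} {γ : Ordinal} {I : Set ℝ} {t : ℝ}

theorem subInd_apply_le (g : ℝ → Ordinal) (γ : Ordinal) (I : Set ℝ) (t : ℝ) :
    subInd g γ I t ≤ g t := by
  unfold subInd
  split_ifs
  · exact sub_le_self _ _
  · exact le_rfl

theorem subInd_apply_mono (hgh : g t ≤ h t) : subInd g γ I t ≤ subInd h γ I t := by
  unfold subInd
  split_ifs
  · exact sub_le.mpr (hgh.trans (le_add_sub _ _))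
  · exact hgh

theorem subInd_apply_lt (hγ : t ∈ I → γ ≤ g t) (hgh : g t < h t) :
    subInd g γ I t < subInd h γ I t := by
  unfold subInd
  split_ifs with htI
  · rwa [lt_sub, Ordinal.add_sub_cancel_of_le (hγ htI)]
  · exact hgh

end SubInd

theorem VanishesBeyond.volume_support_ne_top {g : ℝ → Ordinal} {A : ℝ}
    (hA : VanishesBeyond g A) : volume {t | 0 < t ∧ g t ≠ 0} ≠ ⊤ :=
  ne_top_of_le_ne_top (measure_Ioc_lt_top (a := 0) (b := A)).ne
    (measure_mono fun t ht => ⟨ht.1, not_lt.mp fun hAt => ht.2 (hA t hAt)⟩)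

theorem stmt_1_general {g h G H : ℝ → Ordinal} {γ : Ordinal} {I : Set ℝ}
    (hg : IsCountablySimple g) (hh : IsCountablySimple h)
    (hfin : volume {t | 0 < t ∧ g t ≠ 0} ≠ ⊤) (hle : ∀ t, 0 < t → g t ≤ h t)
    (hI : MeasurableSet I) (hγ : ∀ t ∈ I, 0 < t → γ ≤ g t)
    (hG : IsRearrangement G (subInd g γ I)) (hH : IsRearrangement H (subInd h γ I)) :
    (∀ t, 0 < t → G t ≤ H t) ∧
      volume {t | 0 < t ∧ g t + 1 ≤ h t} ≤ volume {t | 0 < t ∧ G t + 1 ≤ H t} := by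
  have hu := isCountablySimple_subInd hg γ hI
  have hv := isCountablySimple_subInd hh γ hI
  have huv : ∀ t, 0 < t → subInd g γ I t ≤ subInd h γ I t := fun t ht =>
    subInd_apply_mono (hle t ht)
  have hu_fin : volume {t | 0 < t ∧ subInd g γ I t ≠ 0} ≠ ⊤ := by
    refine ne_top_of_le_ne_top hfin (measure_mono fun t ht => ⟨ht.1, fun h0 => ht.2 ?_⟩)
    exact le_antisymm ((subInd_apply_le g γ I t).trans_eq h0) zero_le
  refine ⟨fun t ht => hG.apply_le_apply hH hu hv huv ht, ?_⟩
  simp only [Order.add_one_le_iff]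
  calc volume {t | 0 < t ∧ g t < h t}
      ≤ volume {t | 0 < t ∧ subInd g γ I t < subInd h γ I t} :=
        measure_mono fun t ht => ⟨ht.1, subInd_apply_lt (fun htI => hγ t htI ht.1) ht.2⟩
    _ ≤ volume {t | 0 < t ∧ G t < H t} := hG.volume_setOf_lt_le hH hu hv huv hu_fin

/-- Lemma 3.3, `rearrange`. -/
theorem stmt_1 (g h G H : ℝ → Ordinal) (A : ℝ) (ε : ℝ) (γ : Ordinal)
    (hA : ∀ t : ℝ, A < t → g t = 0 ∧ h t = 0)
    (hgNI : NonIncr g) (hgLC : LeftCont g) (hgFR : FiniteRange g) (hgCV : CountableValued g)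
    (hhNI : NonIncr h) (hhLC : LeftCont h) (hhFR : FiniteRange h) (hhCV : CountableValued h)
    (hle : ∀ t : ℝ, 0 < t → g t ≤ h t)
    (hε : 0 < ε) (hγpos : 0 < γ) (hγ : γ ≤ g ε)
    (hG : IsRearrangement G (subInd g γ (Set.Ioc 0 ε)))
    (hH : IsRearrangement H (subInd h γ (Set.Ioc 0 ε))) :
    (∀ t : ℝ, 0 < t → G t ≤ H t) ∧
      volume {t : ℝ | 0 < t ∧ g t + 1 ≤ h t} ≤ volume {t : ℝ | 0 < t ∧ G t + 1 ≤ H t} := by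
  exact stmt_1_general hgNI.isCountablySimple hhNI.isCountablySimple
    (VanishesBeyond.volume_support_ne_top fun t ht => (hA t ht).1) hle measurableSet_Ioc
    (fun t ht _ => hγ.trans (hgNI t ε ht.1 ht.2)) hG hH
end

section
/- Let γ be a countable ordinal, k a positive integer, and 0 < ε ≤ 1. Let Y = C([0, ω^{ω^γ·k}]) be the Banach space of continuous real-valued functions on the compact ordinal interval [0, ω^{ω^γ·k}] (order topology), where ω^{ω^γ·k} denotes ordinal exponentiation of ω to the ordinal ω^γ·k. Then η(ε, B_{Y^*}) = ω^γ·⌊k/ε⌋ + 1, where B_{Y^*} is the closed unit ball of Y^* and ⌊k/ε⌋ is the greatest integer not exceeding k/ε. -/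
open MeasureTheory Set Ordinal Filter

/-- Ordinal intervals `[0,θ]` are compact in the order topology. -/
noncomputable instance (θ : Ordinal) : CompactSpace (Set.Iic θ) :=
  isCompact_iff_compactSpace.mp (by rw [← Set.Icc_bot]; exact isCompact_Icc)

/-- The Szlenk sets `P_α(ε, B)` of a subset `B` of the dual of `Y`:
`P₀ = B`; `b ∈ P_{α+1}` iff `b ∈ B` and `b` is the weak* limit of a sequence in `P_α` whose
evaluations along some weakly null sequence of the unit ball of `Y` converge to a limit `≥ ε`;
intersections are taken at limit ordinals. -/
noncomputable def SzlenkSet (Y : Type*) [NormedAddCommGroup Y] [NormedSpace ℝ Y]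
    (ε : ℝ) (B : Set (Y →L[ℝ] ℝ)) : Ordinal → Set (Y →L[ℝ] ℝ) :=
  fun α => Ordinal.limitRecOn α B
    (fun _ prev => {b | b ∈ B ∧ ∃ (a : ℕ → Y) (bs : ℕ → Y →L[ℝ] ℝ),
      (∀ n, ‖a n‖ ≤ 1) ∧
      (∀ F : Y →L[ℝ] ℝ, Filter.Tendsto (fun n => F (a n)) Filter.atTop (nhds (0:ℝ))) ∧
      (∀ n, bs n ∈ prev) ∧
      (∀ y : Y, Filter.Tendsto (fun n => bs n y) Filter.atTop (nhds (b y))) ∧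
      (∃ L : ℝ, ε ≤ L ∧ Filter.Tendsto (fun n => bs n (a n)) Filter.atTop (nhds L))})
    (fun β _ ih => ⋂ (γ : Ordinal) (h : γ < β), ih γ h)

/-- The ε-Szlenk index: the least ordinal `α` with `P_α(ε,B) = ∅`. -/
noncomputable def SzlenkIndex (Y : Type*) [NormedAddCommGroup Y] [NormedSpace ℝ Y]
    (ε : ℝ) (B : Set (Y →L[ℝ] ℝ)) : Ordinal :=
  sInf {α : Ordinal | SzlenkSet Y ε B α = ∅}

/-!
Put `θ = ω ^ (ω ^ γ * k)`. For a Szlenk derivation of gain `ε`, a functional has to be a limit of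
functionals of which mass `ε` sits on moving points of smaller Cantor–Bendixson rank.

Upper bound: let `h x ∈ [0, k]` count the blocks of length `ω ^ γ` between the rank of `x` and the
top rank `ω ^ γ * k`. Every functional of the unit ball is at most `k` on `{g | |g| ≤ h}`, and
`ω ^ γ` derivations lower this bound by `ε`: a functional nearly attaining the bound at `g` can only
have mass less than `ε` off the contact set `{|g| ≥ h - 1}`, on which the rank varies inside one
block, so that by induction on `γ` it does not survive `ω ^ γ` derivations. After
`M = ⌊k / ε⌋` blocks of derivations the bound is below `ε`, and one more derivation leaves nothing.

Lower bound: start from the point evaluation at `θ`, viewed as an average of `M` evaluations at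
points of rank `ω ^ γ * k`. In each block of `ω ^ γ` derivations it suffices to move `k` of the `M`
points, as `k / M ≥ ε`. Choosing them cyclically, each point loses one block of rank exactly `k`
times during `M` blocks of derivations.
-/

open Topology
open scoped Function

section Szlenk

variable {Y : Type*} [NormedAddCommGroup Y] [NormedSpace ℝ Y] {ε : ℝ} {S T : Set (Y →L[ℝ] ℝ)}

/-- The Szlenk derivation of a set `S` of functionals: the weak* limits of sequences in `S` whose
values along some weakly null sequence of the unit ball converge to a limit `≥ ε`. In contrast to
the successor step of `SzlenkSet`, there is no intersection with an ambient set. -/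
def szlenkDerivation (ε : ℝ) (S : Set (Y →L[ℝ] ℝ)) : Set (Y →L[ℝ] ℝ) :=
  {b | ∃ (a : ℕ → Y) (bs : ℕ → Y →L[ℝ] ℝ),
    (∀ n, ‖a n‖ ≤ 1) ∧
    (∀ F : Y →L[ℝ] ℝ, Tendsto (fun n => F (a n)) atTop (𝓝 0)) ∧
    (∀ n, bs n ∈ S) ∧
    (∀ y : Y, Tendsto (fun n => bs n y) atTop (𝓝 (b y))) ∧
    ∃ L : ℝ, ε ≤ L ∧ Tendsto (fun n => bs n (a n)) atTop (𝓝 L)}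

theorem szlenkDerivation_mono (h : S ⊆ T) : szlenkDerivation ε S ⊆ szlenkDerivation ε T :=
  fun _ ⟨a, bs, ha, hnull, hbs, hlim⟩ => ⟨a, bs, ha, hnull, fun n => h (hbs n), hlim⟩

theorem szlenkSet_zero : SzlenkSet Y ε S 0 = S :=
  Ordinal.limitRecOn_zero _ _ _

theorem szlenkSet_add_one (α : Ordinal) :
    SzlenkSet Y ε S (α + 1) = S ∩ szlenkDerivation ε (SzlenkSet Y ε S α) :=
  Ordinal.limitRecOn_add_one _ _ _ _

theorem szlenkSet_limit {α : Ordinal} (hα : Order.IsSuccLimit α) :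
    SzlenkSet Y ε S α = ⋂ (β : Ordinal) (_ : β < α), SzlenkSet Y ε S β :=
  Ordinal.limitRecOn_limit _ _ _ _ hα

theorem mem_szlenkSet_iff {α : Ordinal} {b : Y →L[ℝ] ℝ} :
    b ∈ SzlenkSet Y ε S α ↔ b ∈ S ∧ ∀ β < α, b ∈ szlenkDerivation ε (SzlenkSet Y ε S β) := by
  induction α using WellFoundedLT.induction generalizing b with
  | _ α ih =>
  rcases Ordinal.zero_or_succ_or_isSuccLimit α with rfl | ⟨δ, rfl⟩ | hlim
  · simp [szlenkSet_zero]
  · simp only [Order.succ_eq_add_one, szlenkSet_add_one, Order.lt_add_one_iff] at ih ⊢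
    refine and_congr_right fun _ => ⟨fun hb β hβ => szlenkDerivation_mono (fun f hf => ?_) hb,
      fun hb => hb δ le_rfl⟩
    have hfδ := (ih δ le_rfl).1 hf
    exact (ih β hβ).2 ⟨hfδ.1, fun ξ hξ => hfδ.2 ξ (hξ.trans_le hβ)⟩
  · rw [szlenkSet_limit hlim, mem_iInter₂]
    refine ⟨fun hb => ⟨((ih 0 hlim.bot_lt).1 (hb 0 hlim.bot_lt)).1, fun β hβ => ?_⟩,
      fun hb β hβ => (ih β hβ).2 ⟨hb.1, fun ξ hξ => hb.2 ξ (hξ.trans hβ)⟩⟩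
    have hβ' : β + 1 < α := hlim.add_one_lt hβ
    exact ((ih _ hβ').1 (hb _ hβ')).2 β (lt_add_one β)

theorem szlenkSet_subset (α : Ordinal) : SzlenkSet Y ε S α ⊆ S :=
  fun _ hb => (mem_szlenkSet_iff.1 hb).1

theorem szlenkSet_antitone : Antitone (SzlenkSet Y ε S) := fun _ _ hαβ _ hb =>
  have hb := mem_szlenkSet_iff.1 hb
  mem_szlenkSet_iff.2 ⟨hb.1, fun ξ hξ => hb.2 ξ (hξ.trans_le hαβ)⟩

theorem szlenkSet_mono (h : S ⊆ T) (α : Ordinal) : SzlenkSet Y ε S α ⊆ SzlenkSet Y ε T α := by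
  induction α using WellFoundedLT.induction with
  | _ α ih =>
  intro b hb
  rw [mem_szlenkSet_iff] at hb ⊢
  exact ⟨h hb.1, fun β hβ => szlenkDerivation_mono (ih β hβ) (hb.2 β hβ)⟩

theorem szlenkSet_add_subset (α β : Ordinal) :
    SzlenkSet Y ε S (α + β) ⊆ SzlenkSet Y ε (SzlenkSet Y ε S α) β := by
  induction β using WellFoundedLT.induction with
  | _ β ih =>
  intro b hb
  refine mem_szlenkSet_iff.2 ⟨szlenkSet_antitone le_self_add hb, fun ξ hξ => ?_⟩
  exact szlenkDerivation_mono (ih ξ hξ) ((mem_szlenkSet_iff.1 hb).2 (α + ξ) (by gcongr))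

theorem szlenkSet_inter_halfSpace_subset (g : Y) (t : ℝ) (α : Ordinal) :
    SzlenkSet Y ε S α ∩ {f | t < f g} ⊆ SzlenkSet Y ε (S ∩ {f | t < f g}) α := by
  induction α using WellFoundedLT.induction with
  | _ α ih =>
  rintro b ⟨hb, hbt⟩
  rw [mem_szlenkSet_iff] at hb ⊢
  refine ⟨⟨hb.1, hbt⟩, fun β hβ => ?_⟩
  obtain ⟨a, bs, ha, hnull, hbs, hlim, l, hl, hval⟩ := hb.2 β hβ
  obtain ⟨N, hN⟩ := eventually_atTop.1 ((hlim g).eventually (lt_mem_nhds hbt))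
  have hshift : Tendsto (· + N) atTop atTop := tendsto_add_atTop_nat N
  exact ⟨fun n => a (n + N), fun n => bs (n + N), fun n => ha _, fun F => (hnull F).comp hshift,
    fun n => ih β hβ ⟨hbs _, hN _ (Nat.le_add_left N n)⟩, fun y => (hlim y).comp hshift, l, hl,
    hval.comp hshift⟩

theorem szlenkIndex_eq_add_one {α : Ordinal} (hα : (SzlenkSet Y ε S α).Nonempty)
    (hα' : SzlenkSet Y ε S (α + 1) = ∅) : SzlenkIndex Y ε S = α + 1 := by
  refine le_antisymm (csInf_le' hα') (le_csInf ⟨_, hα'⟩ fun β (hβ : SzlenkSet Y ε S β = ∅) => ?_)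
  rw [Order.add_one_le_iff]
  by_contra! hβα
  exact (hα.mono (szlenkSet_antitone hβα)).ne_empty hβ

end Szlenk

section UpperBound

variable {K : Type*} [TopologicalSpace K]

/-- An ordinal-valued rank on `L` which is strictly larger at each point of `L` than at all nearby
points of `L`, such as the Cantor–Bendixson rank of a scattered space. -/
def IsScatteredRank (ρ : K → Ordinal) (L : Set K) : Prop :=
  ∀ x ∈ L, ∀ᶠ y in 𝓝[L \ {x}] x, ρ y < ρ x

theorem IsScatteredRank.upperSemicontinuousOn {ρ : K → Ordinal} {L : Set K}
    (hρ : IsScatteredRank ρ L) : UpperSemicontinuousOn ρ L := by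
  intro x hx a ha
  have h := hρ x hx
  rw [eventually_nhdsWithin_iff] at h ⊢
  filter_upwards [h] with y hy hyL
  by_cases hyx : y = x
  · rwa [hyx]
  · exact (hy ⟨hyL, hyx⟩).trans ha

theorem IsScatteredRank.exists_lt_forall_le {ρ : K → Ordinal} {L : Set K}
    (hρ : IsScatteredRank ρ L) (hL : IsCompact L) {β : Ordinal} (hβ : 0 < β)
    (hlt : ∀ x ∈ L, ρ x < β) : ∃ α < β, ∀ x ∈ L, ρ x ≤ α := by
  rcases L.eq_empty_or_nonempty with rfl | hne
  · exact ⟨0, hβ, by simp⟩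
  · obtain ⟨x, hx, hmax⟩ := hρ.upperSemicontinuousOn.exists_isMaxOn hne hL
    exact ⟨ρ x, hlt x hx, hmax⟩

theorem IsScatteredRank.finite_of_forall_eq_zero {ρ : K → Ordinal} {L : Set K}
    (hρ : IsScatteredRank ρ L) (hL : IsCompact L) (hzero : ∀ x ∈ L, ρ x = 0) : L.Finite := by
  refine hL.finite (isDiscrete_iff_nhdsNE.2 fun x hx => ?_)
  have h := hρ x hx
  simp only [hzero x hx, not_lt_zero, eventually_false_iff_eq_bot] at h
  rwa [sdiff_eq, inter_comm, nhdsWithin_inter'] at h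

/-- A nonnegative weight `h` on `L`, refined by ordinals `σ`: near each point of `L`, the other
points of `L` either have weight larger by at least `1`, or have no smaller weight and a strictly
smaller `σ`. For a scattered rank `ρ ≤ ω ^ γ * n`, the instance of interest is the number
`h = n - ρ / ω ^ γ` of blocks of length `ω ^ γ` above `ρ`, with `σ = ρ % ω ^ γ`. -/
structure IsBlockWeight (σ : K → Ordinal) (h : K → ℝ) (L : Set K) : Prop where
  nonneg : ∀ x ∈ L, 0 ≤ h x
  eventually_lt : ∀ x ∈ L, ∀ᶠ y in 𝓝[L \ {x}] x, h x + 1 ≤ h y ∨ h x ≤ h y ∧ σ y < σ x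

theorem IsScatteredRank.exists_isBlockWeight {ρ : K → Ordinal} {L : Set K}
    (hρ : IsScatteredRank ρ L) {β : Ordinal} (hβ : β ≠ 0) {n : ℕ} (hn : ∀ x ∈ L, ρ x / β ≤ n) :
    ∃ h : K → ℝ, IsBlockWeight (fun x => ρ x % β) h L ∧
      ∀ x ∈ L, h x ≤ n ∧ (ρ x < β * n → 1 ≤ h x) := by
  have hblock : ∀ x ∈ L, ∃ m : ℕ, ρ x / β = m ∧ m ≤ n := fun x hx => by
    obtain ⟨m, hm⟩ := lt_omega0.1 ((hn x hx).trans_lt (natCast_lt_omega0 n))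
    exact ⟨m, hm, by exact_mod_cast hm ▸ hn x hx⟩
  choose! block hdiv hle using hblock
  refine ⟨fun x => n - block x, ⟨fun x hx => by simpa using hle x hx, fun x hx => ?_⟩,
    fun x hx => ⟨by simp, fun hx' => ?_⟩⟩
  · filter_upwards [hρ x hx, self_mem_nhdsWithin] with y hyx hy
    have hdiv_le : ρ y / β ≤ ρ x / β :=
      (Ordinal.mul_le_iff_le_div hβ).1 ((Ordinal.mul_div_le _ _).trans hyx.le)
    rw [hdiv y hy.1, hdiv x hx, Nat.cast_le] at hdiv_le
    rcases hdiv_le.lt_or_eq with hlt | heq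
    · have : (block y : ℝ) + 1 ≤ block x := by exact_mod_cast hlt
      left; linarith
    · rw [← Ordinal.div_add_mod (ρ x) β, ← Ordinal.div_add_mod (ρ y) β, hdiv y hy.1, hdiv x hx,
        heq, add_lt_add_iff_left] at hyx
      exact Or.inr ⟨by rw [heq], hyx⟩
  · rw [Ordinal.lt_mul_iff_div_lt hβ, hdiv x hx, Nat.cast_lt] at hx'
    have : (block x : ℝ) + 1 ≤ n := by exact_mod_cast hx'
    linarith

/-- The points of `L` at which `|g|` comes within `1 - τ` of the weight `h`. A perturbation of `g`
of norm `≤ 1` vanishing there stays below `h + τ`. -/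
def contactSet [CompactSpace K] (L : Set K) (h : K → ℝ) (g : C(K, ℝ)) (τ : ℝ) : Set K :=
  {y ∈ L | h y ≤ |g y| + 1 - τ}

variable [CompactSpace K]

namespace IsBlockWeight

variable {σ : K → Ordinal} {L : Set K} {h : K → ℝ}

theorem isClosed_contactSet (hh : IsBlockWeight σ h L) (hL : IsClosed L) (g : C(K, ℝ)) (τ : ℝ) :
    IsClosed (contactSet L h g τ) := by
  refine isClosed_iff_frequently.2 fun x hx => ?_
  have hxL : x ∈ L := hL.mem_of_frequently_of_tendsto (hx.mono fun _ hy => hy.1) tendsto_id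
  refine ⟨hxL, ?_⟩
  by_contra! hlt
  have hg : ∀ᶠ y in 𝓝 x, |g y| < h x - 1 + τ :=
    g.continuous.abs.continuousAt.eventually_lt_const (by linarith)
  have hweight := eventually_nhdsWithin_iff.1 (hh.eventually_lt x hxL)
  obtain ⟨y, ⟨hyL, hy⟩, hgy, hhy⟩ := (hx.and_eventually (hg.and hweight)).exists
  have hhxy : h x ≤ h y := by
    by_cases hyx : y = x
    · rw [hyx]
    · rcases hhy ⟨hyL, hyx⟩ with h1 | ⟨h1, -⟩ <;> linarith
  linarith

theorem isScatteredRank_contactSet (hh : IsBlockWeight σ h L) {g : C(K, ℝ)}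
    (hg : ∀ x ∈ L, |g x| ≤ h x) {τ : ℝ} (hτ : 0 < τ) :
    IsScatteredRank σ (contactSet L h g τ) := by
  intro x hx
  have hclose : ∀ᶠ y in 𝓝 x, |g y| < |g x| + τ :=
    g.continuous.abs.continuousAt.eventually_lt_const (by linarith)
  have hweight := nhdsWithin_mono x
    (sdiff_subset_sdiff_left (sep_subset L _) : contactSet L h g τ \ {x} ⊆ L \ {x})
    (hh.eventually_lt x hx.1)
  filter_upwards [hweight, eventually_nhdsWithin_of_eventually_nhds hclose, self_mem_nhdsWithin]
    with y hy hgy hyc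
  refine (hy.resolve_left fun hjump => ?_).2
  linarith [hyc.1.2, hg x hx.1]

end IsBlockWeight

theorem exists_abs_le_max_sub (g : C(K, ℝ)) {s : ℝ} (hs : 0 ≤ s) :
    ∃ u : C(K, ℝ), (∀ x, |u x| ≤ max (|g x| - s) 0) ∧ ‖g - u‖ ≤ s ∧ ‖u‖ ≤ ‖g‖ := by
  refine ⟨⟨fun x => g x - max (-s) (min s (g x)), by fun_prop⟩, fun x => ?_, ?_, ?_⟩
  · simp only [ContinuousMap.coe_mk]
    grind
  · refine (ContinuousMap.norm_le _ hs).2 fun x => ?_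
    simp only [ContinuousMap.sub_apply, ContinuousMap.coe_mk, Real.norm_eq_abs]
    grind
  · refine (ContinuousMap.norm_le _ (norm_nonneg _)).2 fun x => le_trans ?_ (g.norm_coe_le_norm x)
    simp only [ContinuousMap.coe_mk, Real.norm_eq_abs]
    grind

theorem apply_le_norm_of_norm_le_one {E : Type*} [SeminormedAddCommGroup E] [NormedSpace ℝ E]
    {f : E →L[ℝ] ℝ} (hf : ‖f‖ ≤ 1) (x : E) : f x ≤ ‖x‖ :=
  (le_abs_self _).trans (f.le_of_opNorm_le hf x |>.trans_eq (one_mul _))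

/-- The functionals in the dual unit ball of `C(K, ℝ)` which are at most `c + δ * ‖g‖` on every
`g` dominated by the weight `h` on `L`. -/
def dominatedFunctionals (L : Set K) (h : K → ℝ) (c δ : ℝ) : Set (C(K, ℝ) →L[ℝ] ℝ) :=
  {f | ‖f‖ ≤ 1 ∧ ∀ g : C(K, ℝ), (∀ x ∈ L, |g x| ≤ h x) → f g ≤ c + δ * ‖g‖}

section Dominated

variable {L : Set K} {h : K → ℝ} {c δ ε : ℝ}

theorem apply_le_of_mem_dominatedFunctionals {f : C(K, ℝ) →L[ℝ] ℝ}
    (hf : f ∈ dominatedFunctionals L h c δ) (hδ : 0 ≤ δ) (hh : ∀ x ∈ L, 0 ≤ h x) {s : ℝ}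
    (hs : 0 ≤ s) {g : C(K, ℝ)} (hg : ∀ x ∈ L, |g x| ≤ h x + s) : f g ≤ c + δ * ‖g‖ + s := by
  obtain ⟨u, hu, hgu, hnorm⟩ := exists_abs_le_max_sub g hs
  have hfu : f u ≤ c + δ * ‖u‖ := hf.2 u fun x hx =>
    (hu x).trans (max_le (by linarith [hg x hx]) (hh x hx))
  calc f g = f u + f (g - u) := by rw [map_sub]; ring
    _ ≤ c + δ * ‖u‖ + s :=
      add_le_add hfu ((apply_le_norm_of_norm_le_one hf.1 _).trans hgu)
    _ ≤ c + δ * ‖g‖ + s := by gcongr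

theorem setOf_norm_le_one_subset_dominatedFunctionals (hc : 0 ≤ c) (hh : ∀ x, h x ≤ c) :
    {f : C(K, ℝ) →L[ℝ] ℝ | ‖f‖ ≤ 1} ⊆ dominatedFunctionals univ h c 0 := by
  refine fun f hf => ⟨hf, fun g hg => ?_⟩
  rw [zero_mul, add_zero]
  refine (apply_le_norm_of_norm_le_one hf g).trans ((ContinuousMap.norm_le _ hc).2 fun x => ?_)
  exact (hg x (mem_univ x)).trans (hh x)

theorem dominatedFunctionals_zero_subset (hδ : 0 ≤ δ) (hc : 0 ≤ c) (hh : ∀ x ∈ L, h x ≤ c) :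
    dominatedFunctionals L 0 0 δ ⊆ dominatedFunctionals L h c δ := by
  refine fun f hf => ⟨hf.1, fun g hg => ?_⟩
  have := apply_le_of_mem_dominatedFunctionals hf hδ (fun _ _ => le_rfl) hc (g := g)
    fun x hx => by simpa using (hg x hx).trans (hh x hx)
  linarith

/-- Off the finite set `F` the unit ball is dominated by the weight, and on `F` a weakly null
sequence tends to `0` uniformly. -/
theorem szlenkDerivation_dominatedFunctionals_eq_empty {F : Set K} (hF : F.Finite)
    (hδ : 0 ≤ δ) (hcδ : c + δ < ε) (hh : ∀ x ∈ L, 0 ≤ h x) (hhF : ∀ x ∈ L, x ∉ F → 1 ≤ h x) :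
    szlenkDerivation ε (dominatedFunctionals L h c δ) = ∅ := by
  refine eq_empty_iff_forall_notMem.2 ?_
  rintro b ⟨a, bs, ha, hnull, hbs, -, l, hl, hval⟩
  have hsum : Tendsto (fun n => ∑ x ∈ hF.toFinset, |a n x|) atTop (𝓝 0) := by
    simpa using tendsto_finsetSum hF.toFinset fun x _ => (hnull (ContinuousMap.evalCLM ℝ x)).abs
  have hbound : ∀ n, bs n (a n) ≤ c + δ + ∑ x ∈ hF.toFinset, |a n x| := fun n => by
    have hsum0 : 0 ≤ ∑ x ∈ hF.toFinset, |a n x| := Finset.sum_nonneg fun _ _ => abs_nonneg _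
    have hle := apply_le_of_mem_dominatedFunctionals (hbs n) hδ hh hsum0 (g := a n) fun x hx => by
      by_cases hxF : x ∈ F
      · have : |a n x| ≤ ∑ x ∈ hF.toFinset, |a n x| :=
          Finset.single_le_sum (f := fun x => |a n x|) (fun _ _ => abs_nonneg _)
            (hF.mem_toFinset.2 hxF)
        linarith [hh x hx]
      · have : |a n x| ≤ 1 := ((a n).norm_coe_le_norm x).trans (ha n)
        linarith [hhF x hx hxF]
    have : δ * ‖a n‖ ≤ δ := mul_le_of_le_one_right hδ (ha n)
    linarith
  have hlim : l ≤ c + δ + 0 := le_of_tendsto_of_tendsto' hval (hsum.const_add _) hbound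
  linarith

/-- A functional which nearly attains its bound at `g` has mass at most `ε` off the contact set of
`g`, since there `g` can still be perturbed by the unit ball. -/
theorem dominatedFunctionals_inter_halfSpace_subset (hδ : 0 ≤ δ) (hh : ∀ x ∈ L, 0 ≤ h x)
    {g : C(K, ℝ)} (hg : ∀ x ∈ L, |g x| ≤ h x) {τ : ℝ} (hτ : 0 < τ) :
    dominatedFunctionals L h c δ ∩ {f | c + δ * (‖g‖ + 1) + τ - ε < f g} ⊆
      dominatedFunctionals (contactSet L h g τ) 0 0 ε := by
  rintro f ⟨hf, hfg : _ < f g⟩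
  refine ⟨hf.1, fun u hu => ?_⟩
  rcases eq_or_ne u 0 with rfl | hu0
  · simp
  have hnorm : 0 < ‖u‖ := norm_pos_iff.2 hu0
  set v := ‖u‖⁻¹ • u with hv
  have hv1 : ‖v‖ ≤ 1 := by rw [norm_smul, norm_inv, norm_norm, inv_mul_cancel₀ hnorm.ne']
  have hgv : ∀ x ∈ L, |(g + v) x| ≤ h x + τ := by
    intro x hx
    by_cases hxc : x ∈ contactSet L h g τ
    · have hux : u x = 0 := abs_nonpos_iff.1 (hu x hxc)
      simpa [hv, hux] using (hg x hx).trans (le_add_of_nonneg_right hτ.le)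
    · have hgap : |g x| + 1 - τ < h x := by simpa [contactSet, hx] using hxc
      have hvx : |v x| ≤ 1 := (v.norm_coe_le_norm x).trans hv1
      calc |(g + v) x| ≤ |g x| + |v x| := abs_add_le _ _
        _ ≤ h x + τ := by linarith
  have hfgv := apply_le_of_mem_dominatedFunctionals hf hδ hh hτ.le hgv
  have hnorm_add : δ * ‖g + v‖ ≤ δ * (‖g‖ + 1) := by
    gcongr
    exact (norm_add_le _ _).trans (by gcongr)
  have hfv : ‖u‖⁻¹ * f u ≤ ε := by
    rw [← _root_.smul_eq_mul, ← map_smul, ← hv]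
    rw [map_add] at hfgv
    linarith
  rw [inv_mul_le_iff₀ hnorm] at hfv
  linarith

end Dominated

/-- The effect of `ω ^ γ` Szlenk derivations on dominated functionals: the bound `c` decreases by
`ε - δ`. -/
def BlockEstimate (K : Type*) [TopologicalSpace K] [CompactSpace K] (γ : Ordinal) : Prop :=
  ∀ ⦃σ : K → Ordinal⦄ ⦃h : K → ℝ⦄ ⦃L : Set K⦄ (c : ℝ) ⦃δ : ℝ⦄ (ε : ℝ), IsClosed L →
    IsBlockWeight σ h L → (∀ x ∈ L, σ x < ω ^ γ) → 0 ≤ δ →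
    SzlenkSet C(K, ℝ) ε (dominatedFunctionals L h c δ) (ω ^ γ) ⊆
      dominatedFunctionals L h (c - (ε - δ)) δ

section BlockEstimate

variable {γ : Ordinal} {σ : K → Ordinal} {h : K → ℝ} {L : Set K} {δ ε : ℝ}

theorem BlockEstimate.szlenkSet_mul_natCast_subset (hγ : BlockEstimate K γ) (c ε : ℝ)
    (hL : IsClosed L) (hh : IsBlockWeight σ h L) (hσ : ∀ x ∈ L, σ x < ω ^ γ) (hδ : 0 ≤ δ) (m : ℕ) :
    SzlenkSet C(K, ℝ) ε (dominatedFunctionals L h c δ) (ω ^ γ * m) ⊆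
      dominatedFunctionals L h (c - m * (ε - δ)) δ := by
  induction m with
  | zero => simp [szlenkSet_zero]
  | succ m ih =>
    rw [Nat.cast_add_one, mul_add_one]
    calc SzlenkSet C(K, ℝ) ε (dominatedFunctionals L h c δ) (ω ^ γ * m + ω ^ γ)
        ⊆ SzlenkSet C(K, ℝ) ε (dominatedFunctionals L h (c - m * (ε - δ)) δ) (ω ^ γ) :=
          (szlenkSet_add_subset _ _).trans (szlenkSet_mono ih _)
      _ ⊆ dominatedFunctionals L h (c - m * (ε - δ) - (ε - δ)) δ := hγ _ ε hL hh hσ hδ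
      _ = dominatedFunctionals L h (c - (m + 1 : ℕ) * (ε - δ)) δ := by
          congr 1; push_cast; ring

theorem szlenkSet_dominatedFunctionals_zero_eq_empty (hγ : ∀ γ' < γ, BlockEstimate K γ')
    (hL : IsClosed L) (hσ : IsScatteredRank σ L) (hσγ : ∀ x ∈ L, σ x < ω ^ γ) (hδ : 0 ≤ δ)
    (hδε : δ < ε) : SzlenkSet C(K, ℝ) ε (dominatedFunctionals L 0 0 δ) (ω ^ γ) = ∅ := by
  rcases eq_or_ne γ 0 with rfl | hγ0
  · have hfin : L.Finite := hσ.finite_of_forall_eq_zero hL.isCompact fun x hx => by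
      simpa using hσγ x hx
    rw [opow_zero, ← zero_add 1, szlenkSet_add_one, szlenkSet_zero,
      szlenkDerivation_dominatedFunctionals_eq_empty (h := 0) (c := 0) hfin hδ (by simpa using hδε)
        (fun _ _ => le_rfl) (fun x hx hxL => absurd hx hxL), inter_empty]
  · obtain ⟨α, hα, hσα⟩ := hσ.exists_lt_forall_le hL.isCompact (opow_pos γ omega0_pos) hσγ
    obtain ⟨γ', hγ', n, hn⟩ := (lt_omega0_opow hγ0).1 hα
    have hpos : (ω : Ordinal) ^ γ' ≠ 0 := (opow_pos γ' omega0_pos).ne'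
    obtain ⟨h, hh, hhn⟩ := hσ.exists_isBlockWeight hpos (n := n) fun x hx =>
      ((Ordinal.lt_mul_iff_div_lt hpos).1 ((hσα x hx).trans_lt hn)).le
    obtain ⟨m, hm⟩ := exists_nat_gt (n / (ε - δ))
    refine eq_empty_iff_forall_notMem.2 fun f hf => ?_
    have hfm := (hγ γ' hγ').szlenkSet_mul_natCast_subset n ε hL hh (fun x _ => mod_lt _ hpos) hδ m
      (szlenkSet_mono (dominatedFunctionals_zero_subset hδ n.cast_nonneg fun x hx => (hhn x hx).1)
        _ (szlenkSet_antitone (opow_mul_lt_opow (natCast_lt_omega0 m) hγ').le hf))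
    have hf0 := hfm.2 0 fun x hx => by simpa using hh.nonneg x hx
    rw [div_lt_iff₀ (by linarith)] at hm
    simp only [map_zero, norm_zero, mul_zero, add_zero] at hf0
    linarith

theorem blockEstimate (γ : Ordinal) : BlockEstimate K γ := by
  induction γ using WellFoundedLT.induction with
  | _ γ ih =>
  intro σ h L c δ ε hL hh hσ hδ f hf
  have hfS := szlenkSet_subset _ hf
  refine ⟨hfS.1, fun g hg => ?_⟩
  by_contra! hfg
  obtain ⟨τ, hτ, hfgτ⟩ : ∃ τ > 0, c + δ * (‖g‖ + 1) + τ - (ε - τ) < f g :=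
    ⟨(f g - (c - (ε - δ) + δ * ‖g‖)) / 3, by linarith, by linarith⟩
  have hf' := szlenkSet_mono (dominatedFunctionals_inter_halfSpace_subset hδ hh.nonneg hg hτ) _
    (szlenkSet_inter_halfSpace_subset g _ _ ⟨hf, hfgτ⟩)
  have hετ : 0 ≤ ε - τ := by linarith [hfS.2 g hg]
  rw [szlenkSet_dominatedFunctionals_zero_eq_empty ih (hh.isClosed_contactSet hL g τ)
    (hh.isScatteredRank_contactSet hg hτ) (fun x hx => hσ x hx.1) hετ (by linarith)] at hf'
  exact hf'

end BlockEstimate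

end UpperBound

section Rank

/-- The Cantor–Bendixson rank of `x` in the order topology on the ordinals: the exponent of the last
term of the Cantor normal form of `x`, read off from the least nonzero tail `x - z`. For `x = 0`
there is no tail, and the junk value `sInf ∅ = 0` gives the correct rank `0`. -/
noncomputable def cantorBendixsonRank (x : Ordinal) : Ordinal :=
  log ω (sInf ((fun z => x - z) '' Iio x))

theorem cantorBendixsonRank_le_log_sub {x z : Ordinal} (h : z < x) :
    cantorBendixsonRank x ≤ log ω (x - z) :=
  log_mono_right _ (csInf_le' (mem_image_of_mem _ h))

theorem cantorBendixsonRank_le_log (x : Ordinal) : cantorBendixsonRank x ≤ log ω x := by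
  rcases eq_or_ne x 0 with rfl | hx
  · simp [cantorBendixsonRank]
  · simpa using cantorBendixsonRank_le_log_sub (pos_iff_ne_zero.2 hx)

theorem cantorBendixsonRank_lt_of_lt_opow {x t : Ordinal} (ht : t ≠ 0) (hx : x < ω ^ t) :
    cantorBendixsonRank x < t := by
  refine (cantorBendixsonRank_le_log x).trans_lt ?_
  rcases eq_or_ne x 0 with rfl | hx0
  · rwa [log_zero_right, pos_iff_ne_zero]
  · exact (lt_opow_iff_log_lt one_lt_omega0 hx0).1 hx

theorem exists_sub_le_opow_cantorBendixsonRank {x : Ordinal} (hx : x ≠ 0) :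
    ∃ z < x, x - z ≤ ω ^ cantorBendixsonRank x := by
  have hne : (Iio x).Nonempty := ⟨0, pos_iff_ne_zero.2 hx⟩
  obtain ⟨z, hz : z < x, hmin : x - z = _⟩ := csInf_mem (hne.image fun z => x - z)
  refine ⟨z, hz, ?_⟩
  rw [cantorBendixsonRank, ← hmin]
  by_contra! hlt
  have hpos : x - z ≠ 0 := by simpa [Ordinal.sub_eq_zero_iff_le] using hz
  have hz' : z + ω ^ log ω (x - z) < x := by rwa [← Ordinal.lt_sub]
  have hle : x - z ≤ x - (z + ω ^ log ω (x - z)) := hmin.trans_le (csInf_le' ⟨_, hz', rfl⟩)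
  rw [← Ordinal.sub_sub] at hle
  exact hle.not_gt (sub_omega0_opow_log_lt hpos)

theorem exists_forall_cantorBendixsonRank_lt {x : Ordinal} (hx : x ≠ 0) :
    ∃ z < x, ∀ y, z < y → y < x → cantorBendixsonRank y < cantorBendixsonRank x := by
  obtain ⟨z, hz, hxz⟩ := exists_sub_le_opow_cantorBendixsonRank hx
  refine ⟨z, hz, fun y hzy hyx => ?_⟩
  have hpos : y - z ≠ 0 := by simpa [Ordinal.sub_eq_zero_iff_le] using hzy
  have hlt : y - z < x - z := by
    rwa [Ordinal.lt_sub, Ordinal.add_sub_cancel_of_le hzy.le]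
  exact (cantorBendixsonRank_le_log_sub hzy).trans_lt
    ((lt_opow_iff_log_lt one_lt_omega0 hpos).1 (hlt.trans_le hxz))

theorem isScatteredRank_cantorBendixsonRank (θ : Ordinal) :
    IsScatteredRank (fun x : Iic θ => cantorBendixsonRank x.1) univ := by
  intro x _
  have hle : ∀ᶠ y in 𝓝 x, y ≤ x := SuccOrder.nhdsLE_eq_nhds x ▸ self_mem_nhdsWithin
  rw [eventually_nhdsWithin_iff]
  rcases eq_or_ne x.1 0 with h0 | h0
  · filter_upwards [hle] with y hyx hy
    exact absurd (Subtype.ext (le_antisymm hyx (h0.trans_le zero_le))) hy.2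
  · obtain ⟨z, hz, hlt⟩ := exists_forall_cantorBendixsonRank_lt h0
    have hgt : ∀ᶠ y : Iic θ in 𝓝 x, z < y.1 :=
      continuous_subtype_val.continuousAt.eventually_const_lt hz
    filter_upwards [hle, hgt] with y hyx hzy hy
    exact hlt y hzy (hyx.lt_of_ne hy.2)

theorem szlenkSet_unitBall_eq_empty {θ γ : Ordinal} {k M : ℕ} {ε : ℝ} (hk : k ≠ 0)
    (hθ : θ ≤ ω ^ (ω ^ γ * k : Ordinal)) (hε : k - M * ε < ε) :
    SzlenkSet C(Iic θ, ℝ) ε {f | ‖f‖ ≤ 1} (ω ^ γ * M + 1) = ∅ := by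
  have hpos : (ω : Ordinal) ^ γ ≠ 0 := (opow_pos γ omega0_pos).ne'
  have hlog : ∀ x : Iic θ, log ω x.1 ≤ ω ^ γ * k := fun x =>
    (log_mono_right ω (x.2.trans hθ)).trans_eq (log_opow one_lt_omega0 _)
  obtain ⟨h, hh, hhk⟩ := (isScatteredRank_cantorBendixsonRank θ).exists_isBlockWeight hpos (n := k)
    fun x _ => Ordinal.div_le_of_le_mul ((cantorBendixsonRank_le_log _).trans (hlog x))
  let F : Set (Iic θ) := {x | ω ^ (ω ^ γ * k : Ordinal) ≤ x.1}
  have hFfin : F.Finite := Set.Subsingleton.finite fun x hx y hy =>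
    Subtype.ext (((x.2.trans hθ).antisymm hx).trans ((y.2.trans hθ).antisymm hy).symm)
  have hone : ∀ x ∈ Set.univ, x ∉ F → 1 ≤ h x := fun x _ hxF =>
    (hhk x (mem_univ x)).2 (cantorBendixsonRank_lt_of_lt_opow
      (mul_ne_zero hpos (Nat.cast_ne_zero.2 hk)) (not_le.1 hxF))
  have hsub : SzlenkSet C(Iic θ, ℝ) ε {f | ‖f‖ ≤ 1} (ω ^ γ * M) ⊆
      dominatedFunctionals univ h (k - M * (ε - 0)) 0 :=
    (szlenkSet_mono (setOf_norm_le_one_subset_dominatedFunctionals k.cast_nonneg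
      fun x => (hhk x (mem_univ x)).1) _).trans
    ((blockEstimate γ).szlenkSet_mul_natCast_subset k ε isClosed_univ hh
      (fun x _ => mod_lt _ hpos) le_rfl M)
  rw [szlenkSet_add_one, ← subset_empty_iff]
  refine inter_subset_right.trans ((szlenkDerivation_mono hsub).trans ?_)
  rw [szlenkDerivation_dominatedFunctionals_eq_empty hFfin le_rfl (by linarith) hh.nonneg hone]

end Rank

section AverageEvaluation

variable {K : Type*} [TopologicalSpace K] {ι : Type*}

/-- The average of the point evaluations at the points of the family `y`. -/
noncomputable def averageEval [Fintype ι] (y : ι → K) : C(K, ℝ) →L[ℝ] ℝ :=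
  (Fintype.card ι : ℝ)⁻¹ • ∑ j, ContinuousMap.evalCLM ℝ (y j)

theorem averageEval_apply [Fintype ι] (y : ι → K) (g : C(K, ℝ)) :
    averageEval y g = (Fintype.card ι : ℝ)⁻¹ * ∑ j, g (y j) := by
  simp [averageEval]

variable [CompactSpace K]

theorem summable_apply_of_sum_abs_le {a : ℕ → C(K, ℝ)} {C : ℝ} (hC : 0 ≤ C)
    (h : ∀ (T : Finset ℕ) (x : K), ∑ n ∈ T, |a n x| ≤ C) (F : C(K, ℝ) →L[ℝ] ℝ) :
    Summable fun n => F (a n) := by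
  refine Summable.of_abs (summable_of_sum_le (c := ‖F‖ * C) (fun n => abs_nonneg _) fun T => ?_)
  have hnorm : ‖∑ n ∈ T, (SignType.sign (F (a n)) : ℝ) • a n‖ ≤ C := by
    refine (ContinuousMap.norm_le _ hC).2 fun x => ?_
    rw [ContinuousMap.sum_apply]
    refine (norm_sum_le _ _).trans ((Finset.sum_le_sum fun n _ => ?_).trans (h T x))
    rw [ContinuousMap.smul_apply, norm_smul, Real.norm_eq_abs, Real.norm_eq_abs]
    refine mul_le_of_le_one_left (abs_nonneg _) ?_
    cases SignType.sign (F (a n)) <;> simp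
  calc ∑ n ∈ T, |F (a n)| = F (∑ n ∈ T, (SignType.sign (F (a n)) : ℝ) • a n) := by
        simp only [map_sum, map_smul, _root_.smul_eq_mul, sign_mul_self]
    _ ≤ ‖F‖ * C := (le_abs_self _).trans (F.le_opNorm_of_le hnorm)

theorem tendsto_charFn_biUnion_zero {A : Finset ι} {V : ι → ℕ → Set K}
    (hV : ∀ n, IsClopen (⋃ j ∈ A, V j n)) (hdisj : ∀ j ∈ A, Pairwise (Disjoint on V j))
    (F : C(K, ℝ) →L[ℝ] ℝ) :
    Tendsto (fun n => F (LocallyConstant.charFn ℝ (hV n))) atTop (𝓝 0) := by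
  refine (summable_apply_of_sum_abs_le A.card.cast_nonneg (fun T x => ?_) F).tendsto_atTop_zero
  have hle : ∀ n, |LocallyConstant.charFn ℝ (hV n) x| ≤ ∑ j ∈ A, (V j n).indicator 1 x := by
    intro n
    rw [LocallyConstant.coe_charFn]
    by_cases hx : x ∈ ⋃ j ∈ A, V j n
    · obtain ⟨j, hj, hxj⟩ := mem_iUnion₂.1 hx
      have := Finset.single_le_sum (f := fun j => (V j n).indicator (1 : K → ℝ) x)
        (fun j _ => indicator_nonneg (fun _ _ => zero_le_one) x) hj
      simpa [hx, hxj] using this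
    · simpa [hx] using Finset.sum_nonneg fun j (_ : j ∈ A) =>
        indicator_nonneg (s := V j n) (f := (1 : K → ℝ)) (fun _ _ => zero_le_one) x
  have hone : ∀ j ∈ A, ∑ n ∈ T, (V j n).indicator (1 : K → ℝ) x ≤ 1 := fun j hj => by
    rw [← Finset.indicator_biUnion_apply T (V j) fun m _ n _ hmn => hdisj j hj hmn]
    exact indicator_le_self' (fun _ _ => zero_le_one) x
  calc ∑ n ∈ T, |LocallyConstant.charFn ℝ (hV n) x|
      ≤ ∑ n ∈ T, ∑ j ∈ A, (V j n).indicator 1 x := Finset.sum_le_sum fun n _ => hle n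
    _ = ∑ j ∈ A, ∑ n ∈ T, (V j n).indicator 1 x := Finset.sum_comm
    _ ≤ A.card := by simpa using Finset.sum_le_sum hone

variable [Fintype ι]

theorem norm_averageEval_le_one (y : ι → K) : ‖averageEval y‖ ≤ 1 := by
  refine ContinuousLinearMap.opNorm_le_bound _ zero_le_one fun g => ?_
  rw [averageEval_apply, norm_mul, norm_inv, Real.norm_natCast, one_mul]
  refine inv_mul_le_of_le_mul₀ (Nat.cast_nonneg _) (norm_nonneg _) ?_
  simpa using norm_sum_le_of_le Finset.univ fun j _ => g.norm_coe_le_norm (y j)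

/-- The witnesses are the indicator functions of the clopen sets `⋃ j ∈ A, V j n`. -/
theorem averageEval_mem_szlenkDerivation {S : Set (C(K, ℝ) →L[ℝ] ℝ)} {ε : ℝ} {A : Finset ι}
    (hA : ε ≤ (A.card : ℝ) / Fintype.card ι) {V : ι → ℕ → Set K}
    (hV : ∀ j ∈ A, ∀ n, IsClopen (V j n)) (hdisj : ∀ j ∈ A, Pairwise (Disjoint on V j))
    {y : ι → K} {u : ℕ → ι → K} (hu : Tendsto u atTop (𝓝 y)) (huV : ∀ n, ∀ j ∈ A, u n j ∈ V j n)
    (huy : ∀ n, ∀ j ∉ A, u n j = y j) (huS : ∀ n, averageEval (u n) ∈ S) :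
    averageEval y ∈ szlenkDerivation ε S := by
  classical
  rw [tendsto_pi_nhds] at hu
  have hW : ∀ n, IsClopen (⋃ j ∈ A, V j n) := fun n => isClopen_biUnion_finset fun j hj => hV j hj n
  have hnull := tendsto_charFn_biUnion_zero hW hdisj
  refine ⟨fun n => LocallyConstant.charFn ℝ (hW n), fun n => averageEval (u n), fun n => ?_, hnull,
    huS, fun g => ?_, _, hA, ?_⟩
  · refine (ContinuousMap.norm_le _ zero_le_one).2 fun x => ?_
    rw [LocallyConstant.coe_continuousMap, LocallyConstant.coe_charFn]
    exact (norm_indicator_le_norm_self _ x).trans_eq norm_one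
  · simp only [averageEval_apply]
    exact (tendsto_finsetSum _ fun j _ => (g.continuous.tendsto (y j)).comp (hu j)).const_mul _
  · have hcoord : ∀ j, Tendsto (fun n => LocallyConstant.charFn ℝ (hW n) (u n j)) atTop
        (𝓝 (if j ∈ A then 1 else 0)) := fun j => by
      split_ifs with hj
      · refine tendsto_const_nhds.congr fun n => Eq.symm ?_
        exact (LocallyConstant.charFn_eq_one _ _ _).2 (mem_biUnion hj (huV n j hj))
      · simp only [huy _ j hj]
        exact hnull (ContinuousMap.evalCLM ℝ (y j))
    have hsum := (tendsto_finsetSum Finset.univ fun j _ => hcoord j).const_mul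
      (Fintype.card ι : ℝ)⁻¹
    simp only [averageEval_apply]
    simpa [div_eq_inv_mul] using hsum

end AverageEvaluation

section LowerBound

theorem exists_opow_dvd_mem_Ioo {r x z : Ordinal} (hx : x ≠ 0) (hdvd : ω ^ (r + 1) ∣ x)
    (hz : z < x) : ∃ y ∈ Ioo z x, ω ^ r ∣ y := by
  have hpos : (ω : Ordinal) ^ r ≠ 0 := (opow_pos r omega0_pos).ne'
  refine ⟨ω ^ r * (z / ω ^ r + 1), ⟨by simpa using Ordinal.lt_mul_succ_div z hpos, ?_⟩,
    dvd_mul_right _ _⟩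
  obtain ⟨q, rfl⟩ := hdvd
  rw [opow_add, opow_one, mul_assoc] at hz hx ⊢
  have hq : q ≠ 0 := by rintro rfl; simp at hx
  have hlim : Order.IsSuccLimit (ω * q) :=
    isSuccLimit_mul_left isSuccLimit_omega0 (pos_iff_ne_zero.2 hq)
  gcongr
  exact hlim.add_one_lt ((Ordinal.lt_mul_iff_div_lt hpos).1 hz)

theorem isClopen_Ioc_of_succOrder {α : Type*} [LinearOrder α] [SuccOrder α] [TopologicalSpace α]
    [OrderTopology α] (a b : α) : IsClopen (Ioc a b) := by
  have hIic : ∀ c : α, IsClopen (Iic c) := fun c =>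
    ⟨isClosed_Iic, isOpen_iff_mem_nhds.2 fun x hx =>
      mem_of_superset (SuccOrder.nhdsLE_eq_nhds x ▸ self_mem_nhdsWithin) (Iic_subset_Iic.2 hx)⟩
  rw [← Iic_sdiff_Iic]
  exact (hIic b).diff (hIic a)

variable {θ : Ordinal}

theorem exists_seq_strictMono_tendsto_opow_dvd (hθ : θ < ω₁) {r : Ordinal} {x : Iic θ}
    (hx : x.1 ≠ 0) (hdvd : ω ^ (r + 1) ∣ x.1) :
    ∃ s : ℕ → Iic θ, StrictMono s ∧ Tendsto s atTop (𝓝 x) ∧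
      ∀ n, (s n).1 ≠ 0 ∧ ω ^ r ∣ (s n).1 := by
  have : Countable (Iic θ) := by
    rw [← Cardinal.mk_le_aleph0_iff, ← Order.Iio_succ, Cardinal.mk_Iio_ordinal,
      Cardinal.lift_le_aleph0, ← Cardinal.lt_aleph_one_iff]
    exact Cardinal.lt_omega_iff_card_lt.1 ((Cardinal.isSuccLimit_omega 1).succ_lt hθ)
  have happrox : ∀ z < x, ∃ y ∈ Ioo z x, y.1 ≠ 0 ∧ ω ^ r ∣ y.1 := fun z hz => by
    obtain ⟨y, ⟨hzy, hyx⟩, hy⟩ := exists_opow_dvd_mem_Ioo hx hdvd hz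
    exact ⟨⟨y, hyx.le.trans x.2⟩, ⟨hzy, hyx⟩, (zero_le.trans_lt hzy).ne', hy⟩
  have hlub : IsLUB {y | y < x ∧ y.1 ≠ 0 ∧ ω ^ r ∣ y.1} x := by
    refine ⟨fun y hy => hy.1.le, fun z hz => ?_⟩
    by_contra! hzx
    obtain ⟨y, ⟨hzy, hyx⟩, hy⟩ := happrox z hzx
    exact (hz ⟨hyx, hy⟩).not_gt hzy
  obtain ⟨y, ⟨-, hyx⟩, hy⟩ := happrox ⟨0, zero_le (a := θ)⟩ (pos_iff_ne_zero.2 hx)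
  obtain ⟨s, hs, -, hlim, hsr⟩ :=
    hlub.exists_seq_strictMono_tendsto_of_notMem (fun h => h.1.false) ⟨y, hyx, hy⟩
  exact ⟨s, hs, hlim, fun n => (hsr n).2⟩

variable {ι : Type*} [Fintype ι] {e e' : ι → Ordinal} {ε : ℝ} {A : Finset ι}

/-- The averages of point evaluations at families of points of `Iic θ` the `j`-th of which has
Cantor–Bendixson rank at least `e j`, expressed by `ω ^ e j ∣ y j` and `y j ≠ 0`. -/
def rankedAverages (θ : Ordinal) (e : ι → Ordinal) : Set (C(Iic θ, ℝ) →L[ℝ] ℝ) :=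
  averageEval '' {y | ∀ j, (y j).1 ≠ 0 ∧ ω ^ e j ∣ (y j).1}

theorem rankedAverages_antitone : Antitone (rankedAverages θ : (ι → Ordinal) → _) :=
  fun _ _ he => image_mono fun _ hy j => ⟨(hy j).1, (opow_dvd_opow ω (he j)).trans (hy j).2⟩

theorem rankedAverages_subset_szlenkDerivation (hθ : θ < ω₁)
    (hA : ε ≤ (A.card : ℝ) / Fintype.card ι) (he : e' ≤ e) (heA : ∀ j ∈ A, e' j < e j) :
    rankedAverages θ e ⊆ szlenkDerivation ε (rankedAverages θ e') := by
  classical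
  rintro _ ⟨y, hy, rfl⟩
  have hseq : ∀ j ∈ A, ∃ s : ℕ → Iic θ, StrictMono s ∧ Tendsto s atTop (𝓝 (y j)) ∧
      ∀ n, (s n).1 ≠ 0 ∧ ω ^ e' j ∣ (s n).1 := fun j hj =>
    exists_seq_strictMono_tendsto_opow_dvd hθ (hy j).1
      ((opow_dvd_opow ω (Order.add_one_le_iff.2 (heA j hj))).trans (hy j).2)
  choose! s hmono hlim hs using hseq
  refine averageEval_mem_szlenkDerivation (A := A) hA (V := fun j n => Ioc (s j n) (s j (n + 1)))
    (u := fun n j => if j ∈ A then s j (n + 1) else y j)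
    (fun j _ n => isClopen_Ioc_of_succOrder _ _)
    (fun j hj => (hmono j hj).monotone.pairwise_disjoint_on_Ioc_succ)
    (tendsto_pi_nhds.2 fun j => ?_) (fun n j hj => ?_) (fun n j hj => if_neg hj)
    fun n => mem_image_of_mem _ fun j => ?_
  · split_ifs with hj
    · exact (hlim j hj).comp (tendsto_add_atTop_nat 1)
    · exact tendsto_const_nhds
  · simpa [hj] using hmono j hj n.lt_succ_self
  · split_ifs with hj
    · exact hs j hj (n + 1)
    · exact ⟨(hy j).1, (opow_dvd_opow ω (he j)).trans (hy j).2⟩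

theorem rankedAverages_add_subset_szlenkSet [DecidableEq ι] (hθ : θ < ω₁)
    (hA : ε ≤ (A.card : ℝ) / Fintype.card ι) {S : Set (C(Iic θ, ℝ) →L[ℝ] ℝ)} {β : Ordinal}
    (he : rankedAverages θ e ⊆ SzlenkSet _ ε S β) (ρ : Ordinal) :
    rankedAverages θ (fun j => e j + if j ∈ A then ρ else 0) ⊆ SzlenkSet _ ε S (β + ρ) := by
  induction ρ using WellFoundedLT.induction with
  | _ ρ ih =>
  rcases eq_or_ne ρ 0 with rfl | hρ
  · simpa using he
  refine fun f hf => mem_szlenkSet_iff.2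
    ⟨szlenkSet_subset β (he (rankedAverages_antitone (fun j => le_self_add) hf)), fun α hα => ?_⟩
  obtain ⟨ρ', hρ', hαρ'⟩ := (Ordinal.lt_add_iff hρ).1 hα
  refine szlenkDerivation_mono ((ih ρ' hρ').trans (szlenkSet_antitone hαρ'))
    (rankedAverages_subset_szlenkDerivation hθ hA (fun j => ?_) (fun j hj => ?_) hf)
  · dsimp only
    gcongr
    split_ifs <;> simp [hρ'.le]
  · simpa [hj] using hρ'

/-- A game in which the rank of the `j`-th point is spent by `ω ^ γ` in every round `i` with
`j ∈ A i`, and each round survives `ω ^ γ` derivations. -/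
theorem rankedAverages_subset_szlenkSet [DecidableEq ι] (hθ : θ < ω₁) (γ : Ordinal)
    {A : ℕ → Finset ι} (hA : ∀ i, ε ≤ ((A i).card : ℝ) / Fintype.card ι) (s : ℕ) :
    rankedAverages θ (fun j => ω ^ γ * Nat.count (fun i => j ∈ A i) s) ⊆
      SzlenkSet _ ε {f | ‖f‖ ≤ 1} (ω ^ γ * s) := by
  induction s with
  | zero =>
    rintro _ ⟨y, -, rfl⟩
    simpa [szlenkSet_zero] using norm_averageEval_le_one y
  | succ s ih =>
    rw [Nat.cast_add_one, mul_add_one]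
    refine subset_trans (rankedAverages_antitone fun j => ?_)
      (rankedAverages_add_subset_szlenkSet hθ (hA s) ih (ω ^ γ))
    rw [Nat.count_succ]
    split_ifs <;> simp [mul_add]

theorem count_add_mod_lt {k M : ℕ} (hkM : k ≤ M) (i : ℕ) :
    Nat.count (fun j => (i + j) % M < k) M = k := by
  have hshift : Nat.count (fun j => (i + j) % M < k) M = Nat.count (· % M < k) M := by
    have h := Nat.count_add (· % M < k) i M
    rw [Nat.add_comm i M, Nat.count_add] at h
    simp only [Nat.add_mod_left] at h
    lia
  have hrange : ({j ∈ Finset.range M | j % M < k} : Finset ℕ) = Finset.range k := by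
    ext j
    grind [Nat.mod_eq_of_lt]
  rw [hshift, Nat.count_eq_card_filter_range, hrange, Finset.card_range]

theorem card_filter_add_mod_lt {k M : ℕ} (hkM : k ≤ M) (i : ℕ) :
    Finset.card {j : Fin M | (i + j) % M < k} = k := by
  rw [Finset.card_filter, Fin.sum_univ_eq_sum_range (fun j => if (i + j) % M < k then 1 else 0),
    ← Finset.card_filter, ← Nat.count_eq_card_filter_range, count_add_mod_lt hkM]

theorem szlenkSet_unitBall_nonempty {γ : Ordinal} {k M : ℕ} (hθ : θ < ω₁)
    (hkθ : ω ^ (ω ^ γ * k : Ordinal) ≤ θ) (hkM : k ≤ M) (hε : ε ≤ (k : ℝ) / M) :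
    (SzlenkSet C(Iic θ, ℝ) ε {f | ‖f‖ ≤ 1} (ω ^ γ * M)).Nonempty := by
  have hlower := rankedAverages_subset_szlenkSet hθ γ (ε := ε)
    (A := fun i => {j : Fin M | (i + j) % M < k}) (fun i => by
      simpa [card_filter_add_mod_lt hkM] using hε) M
  refine Nonempty.mono hlower
    ⟨_, fun _ => ⟨_, hkθ⟩, fun j => ⟨(opow_pos _ omega0_pos).ne', ?_⟩, rfl⟩
  have hcount : Nat.count (fun i => (i + j) % M < k) M = k := by
    simpa only [add_comm] using count_add_mod_lt hkM j
  simp [hcount]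

end LowerBound

theorem opow_opow_mul_natCast_lt_omega_one {γ : Ordinal} (hγ : γ < ω₁) (k : ℕ) :
    ω ^ (ω ^ γ * k : Ordinal) < ω₁ :=
  isPrincipal_opow_omega 1 omega0_lt_omega_one <|
    isPrincipal_mul_omega 1 (isPrincipal_opow_omega 1 omega0_lt_omega_one hγ)
      ((natCast_lt_omega0 k).trans omega0_lt_omega_one)

/-- Corollary 3.10: the ε-Szlenk index of the unit ball of
`C([0, ω^{ω^γ·k}])^*` is `ω^γ·⌊k/ε⌋ + 1`. -/
theorem stmt_8 (γ : Ordinal) (hγ : γ < ω₁) (k : ℕ) (hk : 0 < k) (ε : ℝ)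
    (hε : 0 < ε) (hε1 : ε ≤ 1) :
    SzlenkIndex (C(Set.Iic ((ω : Ordinal) ^ ((ω : Ordinal) ^ γ * (k : Ordinal))), ℝ)) ε
        {f : C(Set.Iic ((ω : Ordinal) ^ ((ω : Ordinal) ^ γ * (k : Ordinal))), ℝ) →L[ℝ] ℝ |
          ‖f‖ ≤ 1} =
      (ω : Ordinal) ^ γ * ((⌊(k : ℝ) / ε⌋₊ : ℕ) : Ordinal) + 1 := by
  have hfloor_le : (⌊(k : ℝ) / ε⌋₊ : ℝ) ≤ k / ε := Nat.floor_le (by positivity)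
  have hlt_floor : (k : ℝ) / ε < ⌊(k : ℝ) / ε⌋₊ + 1 := Nat.lt_floor_add_one _
  have hk_le : k ≤ ⌊(k : ℝ) / ε⌋₊ :=
    Nat.le_floor ((le_div_iff₀ hε).2 (mul_le_of_le_one_right k.cast_nonneg hε1))
  have hε_le : ε ≤ k / ⌊(k : ℝ) / ε⌋₊ :=
    (le_div_comm₀ (by exact_mod_cast hk.trans_le hk_le) hε).1 hfloor_le
  have hsub_lt : k - ⌊(k : ℝ) / ε⌋₊ * ε < ε := by
    linarith [(div_lt_iff₀ hε).1 hlt_floor]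
  exact szlenkIndex_eq_add_one
    (szlenkSet_unitBall_nonempty (opow_opow_mul_natCast_lt_omega_one hγ k) le_rfl hk_le hε_le)
    (szlenkSet_unitBall_eq_empty hk.ne' le_rfl hsub_lt)
end

section
/- Let X = X_{a,b} be the Bourgain–Delbaen space and Q : ℓ∞^* → X^* the restriction (quotient) map. Then the sequence (Q e_n^*)_{n∈ℕ} is equivalent to the standard unit vector basis of ℓ₁; in particular, for every finitely supported sequence of reals (a_k), λ^{-1} Σ_k |a_k| ≤ ‖Σ_k a_k Q e_k^*‖_{X^*} ≤ Σ_k |a_k|. Moreover, the closed linear span of {Q e_n^* : n ∈ ℕ} is all of X^*. -/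
open MeasureTheory Set Ordinal Filter
open scoped Classical

/-- `ℓ∞ = ℓ∞(ℕ)`. -/
noncomputable abbrev linf : Type := lp (fun _ : ℕ => ℝ) ⊤

/-- The `k`-th coordinate functional `e_k^*` on `ℓ∞`. -/
noncomputable def coordFn (k : ℕ) : linf →L[ℝ] ℝ :=
  LinearMap.mkContinuous
    { toFun := fun x => x k
      map_add' := fun _ _ => rfl
      map_smul' := fun _ _ => rfl }
    1 (fun x => by
      rw [one_mul]
      exact lp.norm_apply_le_norm (E := fun _ : ℕ => ℝ) ENNReal.top_ne_zero x k)

/-- The `k`-th coordinate vector `e_k` of `ℓ∞`. -/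
noncomputable def ek (k : ℕ) : linf := lp.single ⊤ k (1 : ℝ)

/-- `E_n = span{e_k : 1 ≤ k ≤ d n}`. -/
noncomputable def Esub (d : ℕ → ℕ) (n : ℕ) : Submodule ℝ linf :=
  Submodule.span ℝ {x : linf | ∃ k : ℕ, 1 ≤ k ∧ k ≤ d n ∧ x = ek k}

/-- All the data of the Bourgain–Delbaen construction: the constants `a`, `b`, `λ`, the
dimensions `d n`, the enumeration `φ` of tuples `(σ',i,m,σ'',j)`, the coordinate projections
`π_m`, the embeddings `i_{m,n}` and the limit projections `P_m`, together with their defining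
properties. -/
structure BDSetup where
  a : ℝ
  b : ℝ
  lam : ℝ
  hb : 0 < b
  hba : b < a
  ha : a < 1
  hlam : 1 < lam
  hineq : a + 2 * b * lam < lam
  /-- the dimensions -/
  d : ℕ → ℕ
  hd1 : d 1 = 1
  hd2 : d 2 = 2
  /-- the enumeration of the tuples `(σ', i, m, σ'', j)` -/
  φ : ℕ → ℤ × ℕ × ℕ × ℤ × ℕ
  hφ : ∀ n : ℕ, 2 ≤ n → Set.BijOn φ {k : ℕ | d n < k ∧ k ≤ d (n + 1)}
      {q : ℤ × ℕ × ℕ × ℤ × ℕ | (q.1 = 1 ∨ q.1 = -1) ∧ (q.2.2.2.1 = 1 ∨ q.2.2.2.1 = -1) ∧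
        1 ≤ q.2.2.1 ∧ q.2.2.1 < n ∧ 1 ≤ q.2.1 ∧ q.2.1 ≤ d q.2.2.1 ∧
        1 ≤ q.2.2.2.2 ∧ q.2.2.2.2 ≤ d n}
  /-- the coordinate projections `π_m` -/
  pi : ℕ → (linf →L[ℝ] linf)
  hpi : ∀ (m : ℕ) (x : linf) (k : ℕ), pi m x k = if 1 ≤ k ∧ k ≤ d m then x k else 0
  /-- the embeddings `i_{m,n}` -/
  iMap : ℕ → ℕ → (linf →L[ℝ] linf)
  hi12 : ∀ x : linf, x ∈ Esub d 1 → iMap 1 2 x = x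
  histep : ∀ n : ℕ, 2 ≤ n → ∀ x : linf, x ∈ Esub d n →
    iMap n (n + 1) x = x + ∑ k ∈ Finset.Ioc (d n) (d (n + 1)),
      (a * ((φ k).1 : ℝ) * x (φ k).2.1 +
        b * (((φ k).2.2.2.1 : ℤ) : ℝ) *
          ((x - iMap (φ k).2.2.1 n (pi (φ k).2.2.1 x)) (φ k).2.2.2.2)) • ek k
  hicomp : ∀ m n : ℕ, 1 ≤ m → m < n → ∀ x : linf, x ∈ Esub d m →
    iMap m (n + 1) x = iMap n (n + 1) (iMap m n x)
  hinorm : ∀ m n : ℕ, 1 ≤ m → m < n → ∀ x : linf, x ∈ Esub d m → ‖iMap m n x‖ ≤ lam * ‖x‖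
  /-- the coordinatewise limit projections `P_m` -/
  P : ℕ → (linf →L[ℝ] linf)
  hP0 : P 0 = 0
  hPlim : ∀ m : ℕ, 1 ≤ m → ∀ (x : linf) (k : ℕ),
    Filter.Tendsto (fun n => (iMap m n (pi m x)) k) Filter.atTop (nhds (P m x k))
  hPproj : ∀ m : ℕ, (P m).comp (P m) = P m
  hPnorm : ∀ m : ℕ, ‖P m‖ ≤ lam

/-- The Bourgain–Delbaen space `X = X_{a,b}`, the closed linear span of `⋃ m, P_m(E_m)`. -/
noncomputable def Xsub (S : BDSetup) : Submodule ℝ linf :=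
  (Submodule.span ℝ (⋃ m ∈ {m : ℕ | 1 ≤ m}, (S.P m) '' (Esub S.d m))).topologicalClosure

/-- The restriction (quotient) map `Q : ℓ∞^* → X^*`. -/
noncomputable def QMap (S : BDSetup) (f : linf →L[ℝ] ℝ) : (Xsub S) →L[ℝ] ℝ :=
  f.comp (Xsub S).subtypeL

/-- The images `Q e_k^*` of the coordinate functionals in `X^*`. -/
noncomputable def Qe (S : BDSetup) (k : ℕ) : (Xsub S) →L[ℝ] ℝ := QMap S (coordFn k)

/-!
The functional `∑ c_k Q e_k^*` is tested on `P_m z`, where `z` is the vector of signs of the `c_k`: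
this has norm at most `λ` and, for `m` large, the same coordinates as `z` on the support of `c`.

For the density, `f ∘ P_m` is a combination of the `Q e_k^*` with `k ≤ d_m`, so it suffices that
`f ∘ P_m → f`. If this fails, there is a bounded block sequence `x` with `f (x l) = 1` for all `l`,
so that its partial sums grow linearly. But every coordinate of a vector `y` above level `1` is,
up to a contribution of a single level, `± a (P_m y)_i ± b (y - P_m y)_j` for some `m, i, j`. As
`b < a`, a block sum over `[u, v)` is therefore controlled by a splitting point `w`:
`‖∑_[u, v)‖ ≤ a (‖∑_[u, w)‖ + ‖∑_[w, v)‖) + C`. Since `a < 1`, iterating this estimate makes the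
partial sums `o(N)`, a contradiction.
-/

/-! ### Splitting estimates -/

theorem exists_forall_le_mul_add_of_split {A : ℕ → ℕ → ℝ} {a C M : ℝ} (ha0 : 0 ≤ a) (ha1 : a < 1)
    (hM : ∀ u v, u ≤ v → A u v ≤ M * ↑(v - u))
    (hsplit : ∀ u v, u ≤ v → ∃ w ∈ Finset.Icc u v, A u v ≤ a * (A u w + A w v) + C)
    {ε : ℝ} (hε : 0 < ε) : ∃ K, ∀ u v, u ≤ v → A u v ≤ ε * ↑(v - u) + K := by
  -- Each application of the splitting estimate improves the slope `M * a ^ r` by a factor `a`.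
  have slope : ∀ r : ℕ, ∃ K, ∀ u v, u ≤ v → A u v ≤ M * a ^ r * ↑(v - u) + K := by
    intro r
    induction r with
    | zero => exact ⟨0, by simpa using hM⟩
    | succ r ih =>
      obtain ⟨K, hK⟩ := ih
      refine ⟨a * (2 * K) + C, fun u v huv => ?_⟩
      obtain ⟨w, hw, hA⟩ := hsplit u v huv
      obtain ⟨huw, hwv⟩ := Finset.mem_Icc.1 hw
      have hlen : ((v - u : ℕ) : ℝ) = ↑(w - u) + ↑(v - w) := by
        rw [← Nat.cast_add]; congr 1; omega
      calc A u v ≤ a * (A u w + A w v) + C := hA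
        _ ≤ a * ((M * a ^ r * ↑(w - u) + K) + (M * a ^ r * ↑(v - w) + K)) + C := by
            gcongr
            exacts [hK u w huw, hK w v hwv]
        _ = M * a ^ (r + 1) * ↑(v - u) + (a * (2 * K) + C) := by rw [hlen]; ring
  have hlim : Tendsto (fun r : ℕ => M * a ^ r) atTop (nhds 0) := by
    simpa using (tendsto_pow_atTop_nhds_zero_of_lt_one ha0 ha1).const_mul M
  obtain ⟨r, hr⟩ := (hlim.eventually_le_const hε).exists
  obtain ⟨K, hK⟩ := slope r
  exact ⟨K, fun u v huv => (hK u v huv).trans (by gcongr)⟩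

theorem isLittleO_natCast_of_forall_exists_le {X : Type*} [SeminormedAddCommGroup X] {f : ℕ → X}
    (h : ∀ ε > (0 : ℝ), ∃ K, ∀ N : ℕ, ‖f N‖ ≤ ε * N + K) :
    f =o[atTop] (fun N : ℕ => (N : ℝ)) := by
  refine Asymptotics.IsLittleO.of_bound fun ε hε => ?_
  obtain ⟨K, hK⟩ := h (ε / 2) (half_pos hε)
  have hlarge : ∀ᶠ N : ℕ in atTop, K ≤ ε / 2 * N :=
    (tendsto_natCast_atTop_atTop.const_mul_atTop (half_pos hε)).eventually_ge_atTop K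
  filter_upwards [hlarge] with N hN
  rw [Real.norm_natCast]
  linarith [hK N]

theorem norm_sum_le_of_eq_zero_of_ne {ι X : Type*} [SeminormedAddCommGroup X] {s : Finset ι}
    {f : ι → X} {i₀ : ι} {D : ℝ} (h₀ : ‖f i₀‖ ≤ D) (h : ∀ i ≠ i₀, f i = 0) :
    ‖∑ i ∈ s, f i‖ ≤ D := by
  by_cases hi₀ : i₀ ∈ s
  · rwa [Finset.sum_eq_single_of_mem i₀ hi₀ fun i _ hi => h i hi]
  · rw [Finset.sum_eq_zero fun i hi => h i (ne_of_mem_of_not_mem hi hi₀), norm_zero]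
    exact (norm_nonneg _).trans h₀

/-! ### Block sequences and shrinking decompositions -/

section Block

variable {𝕜 X : Type*} [NontriviallyNormedField 𝕜] [SeminormedAddCommGroup X] [NormedSpace 𝕜 X]
  {P : ℕ → X →L[𝕜] X}

/-- `x` is a block sequence, with break points `n 0 < n 1 < ⋯`, for the partial sum projections
`P 0, P 1, …` of a decomposition of `X`: the vector `x l` lives on the levels between `n l` and
`n (l + 1)`. -/
structure IsBlockSequence (P : ℕ → X →L[𝕜] X) (n : ℕ → ℕ) (x : ℕ → X) : Prop where
  strictMono : StrictMono n
  apply_left : ∀ l, P (n l) (x l) = 0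
  apply_right : ∀ l, P (n (l + 1)) (x l) = x l

theorem exists_isBlockSequence {p : X → Prop}
    (h : ∀ m, ∃ n x, m < n ∧ P m x = 0 ∧ P n x = x ∧ p x) :
    ∃ n x, IsBlockSequence P n x ∧ ∀ l, p (x l) := by
  choose next vec hlt hleft hright hp using h
  have hnext : ∀ l, next^[l + 1] 0 = next (next^[l] 0) := fun l =>
    Function.iterate_succ_apply' next l 0
  refine ⟨fun l => next^[l] 0, fun l => vec (next^[l] 0), ⟨?_, fun l => hleft _, fun l => ?_⟩,
    fun l => hp _⟩
  · exact strictMono_nat_of_lt_succ fun l => hnext l ▸ hlt _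
  · rw [hnext]
    exact hright _

namespace IsBlockSequence

variable {n : ℕ → ℕ} {x : ℕ → X} (hx : IsBlockSequence P n x)
  (hcomp : ∀ n m, ∀ x : X, P n (P m x) = P (min n m) x)

include hx hcomp

theorem apply_eq_self {l q : ℕ} (hq : n (l + 1) ≤ q) : P q (x l) = x l := by
  rw [← hx.apply_right l, hcomp, min_eq_right hq]

theorem apply_eq_zero {l q : ℕ} (hq : q ≤ n l) : P q (x l) = 0 := by
  rw [← min_eq_left hq, ← hcomp, hx.apply_left, map_zero]

theorem exists_pivot (p : ℕ) : ∃ l₀, (∀ l < l₀, ∀ q ≥ p, P q (x l) = x l) ∧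
    ∀ l > l₀, ∀ q ≤ p + 1, P q (x l) = 0 := by
  refine ⟨Nat.findGreatest (fun l => n l ≤ p) p, fun l hl q hq => ?_, fun l hl q hq => ?_⟩
  · have hpivot : n (Nat.findGreatest (fun l => n l ≤ p) p) ≤ p :=
      Nat.findGreatest_of_ne_zero (P := fun l => n l ≤ p) rfl (Nat.ne_zero_of_lt hl)
    exact hx.apply_eq_self hcomp (((hx.strictMono.monotone hl).trans hpivot).trans hq)
  · have hpl : p < n l := by
      by_contra! hle
      exact Nat.findGreatest_is_greatest hl (hx.strictMono.le_apply.trans hle) hle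
    exact hx.apply_eq_zero hcomp (hq.trans hpl)

variable {D : ℝ} (hD : ∀ q l, ‖P q (x l)‖ ≤ D)

include hD

theorem norm_apply_succ_sub_apply_sum_le (p : ℕ) (s : Finset ℕ) :
    ‖P (p + 1) (∑ l ∈ s, x l) - P p (∑ l ∈ s, x l)‖ ≤ 2 * D := by
  obtain ⟨l₀, hlow, hhigh⟩ := hx.exists_pivot hcomp p
  rw [map_sum, map_sum, ← Finset.sum_sub_distrib]
  refine norm_sum_le_of_eq_zero_of_ne (i₀ := l₀) ?_ fun l hl => ?_
  · linarith [norm_sub_le (P (p + 1) (x l₀)) (P p (x l₀)), hD (p + 1) l₀, hD p l₀]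
  · rcases hl.lt_or_gt with hl | hl
    · rw [hlow l hl _ p.le_succ, hlow l hl _ le_rfl, _root_.sub_self]
    · rw [hhigh l hl _ le_rfl, hhigh l hl _ p.le_succ, _root_.sub_self]

theorem exists_norm_apply_sum_sub_sum_le (p : ℕ) {u v : ℕ} (huv : u ≤ v) :
    ∃ w ∈ Finset.Icc u v,
      ‖P p (∑ l ∈ Finset.Ico u v, x l) - ∑ l ∈ Finset.Ico u w, x l‖ ≤ D := by
  obtain ⟨l₀, hlow, hhigh⟩ := hx.exists_pivot hcomp p
  refine ⟨max u (min v l₀), Finset.mem_Icc.2 (by omega), ?_⟩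
  have hinit : Finset.Ico u (max u (min v l₀)) = {l ∈ Finset.Ico u v | l < l₀} := by
    ext l
    simp only [Finset.mem_Ico, Finset.mem_filter]
    omega
  rw [hinit, Finset.sum_filter, map_sum, ← Finset.sum_sub_distrib]
  refine norm_sum_le_of_eq_zero_of_ne (i₀ := l₀) ?_ fun l hl => ?_
  · simpa using hD p l₀
  · rcases hl.lt_or_gt with hl | hl
    · rw [if_pos hl, hlow l hl p le_rfl, _root_.sub_self]
    · rw [if_neg hl.not_gt, hhigh l hl p p.le_succ, _root_.sub_self]

end IsBlockSequence

theorem opNorm_le_of_dense {Y : Type*} [SeminormedAddCommGroup Y] [NormedSpace 𝕜 Y]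
    {f : X →L[𝕜] Y} {s : Set X} (hs : Dense s) {C : ℝ} (hC : 0 ≤ C)
    (h : ∀ x ∈ s, ‖f x‖ ≤ C * ‖x‖) : ‖f‖ ≤ C := by
  have hclosed : IsClosed {x | ‖f x‖ ≤ C * ‖x‖} :=
    isClosed_le f.continuous.norm (continuous_const.mul continuous_norm)
  exact f.opNorm_le_bound hC fun x => hclosed.closure_subset_iff.2 h (hs x)

theorem exists_block_of_le_norm_sub_comp (hcomp : ∀ n m, ∀ x : X, P n (P m x) = P (min n m) x)
    {C : ℝ} (hC : ∀ n, ‖P n‖ ≤ C) (hdense : Dense {x | ∃ n, P n x = x}) {f : X →L[𝕜] 𝕜}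
    {δ : ℝ} (hδ : 0 < δ) {m : ℕ} (hm : δ ≤ ‖f - f.comp (P m)‖) :
    ∃ n x, m < n ∧ P m x = 0 ∧ P n x = x ∧ ‖x‖ ≤ (1 + C) / (δ / 2) ∧ f x = 1 := by
  obtain ⟨y, ⟨k, hk⟩, hy⟩ : ∃ y ∈ {x | ∃ n, P n x = x},
      δ / 2 * ‖y‖ < ‖(f - f.comp (P m)) y‖ := by
    by_contra! hle
    linarith [opNorm_le_of_dense hdense (half_pos hδ).le hle]
  let z := y - P m y
  replace hy : δ / 2 * ‖y‖ < ‖f z‖ := by simpa [z, map_sub] using hy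
  have hfz : 0 < ‖f z‖ := (by positivity : 0 ≤ δ / 2 * ‖y‖).trans_lt hy
  have hPz : P m z = 0 := by rw [map_sub, hcomp, min_self, _root_.sub_self]
  have hfix : P (max k (m + 1)) z = z := by
    rw [map_sub, hcomp, min_eq_right (by omega)]
    nth_rewrite 1 [← hk]
    rw [hcomp, min_eq_right (le_max_left _ _), hk]
  have hz : ‖z‖ ≤ (1 + C) * ‖y‖ := by
    linarith [norm_sub_le y (P m y), (P m).le_of_opNorm_le (hC m) y]
  have hC0 : 0 ≤ 1 + C := by linarith [(norm_nonneg _).trans (hC m)]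
  refine ⟨max k (m + 1), (f z)⁻¹ • z, by omega, ?_, ?_, ?_, ?_⟩
  · rw [map_smul, hPz, smul_zero]
  · rw [map_smul, hfix]
  · rw [norm_smul, norm_inv, inv_mul_le_iff₀ hfz, mul_div_assoc', le_div_iff₀ (half_pos hδ)]
    calc ‖z‖ * (δ / 2) ≤ (1 + C) * ‖y‖ * (δ / 2) := by gcongr
      _ = (δ / 2 * ‖y‖) * (1 + C) := by ring
      _ ≤ ‖f z‖ * (1 + C) := by gcongr
  · rw [map_smul, _root_.smul_eq_mul, inv_mul_cancel₀ (norm_pos_iff.1 hfz)]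

end Block

theorem tendsto_comp_of_isLittleO_block_sums {𝕜 X : Type*} [RCLike 𝕜] [SeminormedAddCommGroup X]
    [NormedSpace 𝕜 X] {P : ℕ → X →L[𝕜] X}
    (hcomp : ∀ n m, ∀ x : X, P n (P m x) = P (min n m) x)
    {C : ℝ} (hC : ∀ n, ‖P n‖ ≤ C) (hdense : Dense {x | ∃ n, P n x = x})
    (hblock : ∀ n x M, IsBlockSequence P n x → (∀ l, ‖x l‖ ≤ M) →
      (fun N => ∑ l ∈ Finset.range N, x l) =o[atTop] (fun N : ℕ => (N : ℝ)))
    (f : X →L[𝕜] 𝕜) : Tendsto (fun n => f.comp (P n)) atTop (nhds f) := by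
  by_contra hlim
  obtain ⟨δ, hδ, hfar⟩ : ∃ δ > 0, ∀ N, ∃ m ≥ N, δ ≤ dist (f.comp (P m)) f := by
    simpa only [Metric.tendsto_atTop, not_forall, not_exists, not_lt, exists_prop] using hlim
  obtain ⟨n, x, hx, hfx⟩ : ∃ n x, IsBlockSequence P n x ∧
      ∀ l, ‖x l‖ ≤ (1 + C) / (δ / 2) ∧ f (x l) = 1 := by
    refine exists_isBlockSequence (p := fun x => ‖x‖ ≤ (1 + C) / (δ / 2) ∧ f x = 1) fun m => ?_
    obtain ⟨q, hmq, hq⟩ := hfar m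
    rw [dist_comm, dist_eq_norm] at hq
    obtain ⟨n, x, hqn, hPx, hfix, hfx⟩ := exists_block_of_le_norm_sub_comp hcomp hC hdense hδ hq
    exact ⟨n, x, hmq.trans_lt hqn, by rw [← min_eq_left hmq, ← hcomp, hPx, map_zero], hfix, hfx⟩
  have hsmall := (hblock n x _ hx fun l => (hfx l).1).def
    (by positivity : 0 < (‖f‖ + 1)⁻¹)
  obtain ⟨N, hN, hNpos⟩ := (hsmall.and (eventually_gt_atTop 0)).exists
  rw [Real.norm_natCast] at hN
  have hNpos' : (0 : ℝ) < N := by exact_mod_cast hNpos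
  have : (N : ℝ) < N := by
    calc (N : ℝ) = ‖f (∑ l ∈ Finset.range N, x l)‖ := by simp [map_sum, (hfx _).2]
      _ ≤ ‖f‖ * ‖∑ l ∈ Finset.range N, x l‖ := f.le_opNorm _
      _ ≤ ‖f‖ * ((‖f‖ + 1)⁻¹ * N) := by gcongr
      _ = ‖f‖ / (‖f‖ + 1) * N := by ring
      _ < N := mul_lt_of_lt_one_left hNpos' ((div_lt_one (by positivity)).2 (lt_add_one _))
  exact this.false

/-! ### Finite sums of functionals -/

theorem norm_sum_smul_le_sum_norm {ι 𝕜 Y : Type*} [NormedField 𝕜] [SeminormedAddCommGroup Y]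
    [NormedSpace 𝕜 Y] (c : ι → 𝕜) {y : ι → Y} {s : Finset ι}
    (hy : ∀ k ∈ s, ‖y k‖ ≤ 1) : ‖∑ k ∈ s, c k • y k‖ ≤ ∑ k ∈ s, ‖c k‖ :=
  norm_sum_le_of_le s fun k hk => (norm_smul_le _ _).trans
    (mul_le_of_le_one_right (norm_nonneg _) (hy k hk))

theorem sum_abs_le_norm_sum_smul_mul {ι X : Type*} [SeminormedAddCommGroup X] [NormedSpace ℝ X]
    (c : ι → ℝ) (φ : ι → X →L[ℝ] ℝ) {s : Finset ι} {x : X} {C : ℝ} (hx : ‖x‖ ≤ C)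
    (hφ : ∀ k ∈ s, φ k x = SignType.sign (c k)) :
    ∑ k ∈ s, |c k| ≤ ‖∑ k ∈ s, c k • φ k‖ * C := by
  calc ∑ k ∈ s, |c k| = (∑ k ∈ s, c k • φ k) x := by
        rw [_root_.sum_apply]
        refine Finset.sum_congr rfl fun k hk => ?_
        rw [_root_.smul_apply, hφ k hk, _root_.smul_eq_mul, self_mul_sign]
    _ ≤ ‖∑ k ∈ s, c k • φ k‖ * ‖x‖ := (le_abs_self _).trans ((∑ k ∈ s, c k • φ k).le_opNorm x)
    _ ≤ ‖∑ k ∈ s, c k • φ k‖ * C := by gcongr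

/-! ### Coordinates in `ℓ∞` -/

theorem linf_ext {x y : linf} (h : ∀ k, x k = y k) : x = y :=
  lp.ext (funext h)

theorem abs_apply_le_norm (x : linf) (k : ℕ) : |x k| ≤ ‖x‖ :=
  lp.norm_apply_le_norm ENNReal.top_ne_zero x k

theorem sum_smul_ek_apply (s : Finset ℕ) (c : ℕ → ℝ) (j : ℕ) :
    (∑ k ∈ s, c k • ek k) j = if j ∈ s then c j else 0 := by
  simp only [lp.coeFn_sum, Finset.sum_apply, lp.coeFn_smul, Pi.smul_apply, ek, lp.coeFn_single,
    Pi.single_apply, _root_.smul_eq_mul, mul_ite, mul_one, mul_zero, Finset.sum_ite_eq]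

theorem mem_Esub_iff {d : ℕ → ℕ} {n : ℕ} {x : linf} :
    x ∈ Esub d n ↔ ∀ k, ¬ (1 ≤ k ∧ k ≤ d n) → x k = 0 := by
  constructor
  · intro hx k hk
    have hker : Esub d n ≤ (coordFn k).ker := by
      refine Submodule.span_le.2 ?_
      rintro y ⟨j, hj1, hj2, rfl⟩
      have hkj : k ≠ j := by
        rintro rfl
        exact hk ⟨hj1, hj2⟩
      exact lp.single_apply_ne (E := fun _ : ℕ => ℝ) ⊤ j 1 hkj
    exact hker hx
  · intro h
    have hx : x = ∑ k ∈ Finset.Icc 1 (d n), x k • ek k := by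
      refine linf_ext fun j => ?_
      rw [sum_smul_ek_apply]
      split_ifs with hj
      · rfl
      · exact h j (by simpa using hj)
    rw [hx]
    refine Submodule.sum_mem _ fun k hk => Submodule.smul_mem _ _ (Submodule.subset_span ?_)
    exact ⟨k, (Finset.mem_Icc.1 hk).1, (Finset.mem_Icc.1 hk).2, rfl⟩

theorem exists_mem_norm_le_of_forall_exists_abs_apply_le {ι : Type*} {s : Finset ι} {R : ι → ℝ}
    (hR : ∀ w ∈ s, 0 ≤ R w) {x : linf} (h : ∀ k, ∃ w ∈ s, |x k| ≤ R w) : ∃ w ∈ s, ‖x‖ ≤ R w := by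
  have hs : s.Nonempty := (h 0).imp fun _ => And.left
  obtain ⟨w₀, hw₀, hmax⟩ := s.exists_max_image R hs
  refine ⟨w₀, hw₀, lp.norm_le_of_forall_le (hR w₀ hw₀) fun k => ?_⟩
  obtain ⟨w, hw, hxw⟩ := h k
  exact hxw.trans (hmax w hw)

namespace BDSetup

variable (S : BDSetup)

/-! ### The embeddings `i_{m,n}` -/

theorem d_lt_succ_of_one_le_d {n : ℕ} (hn : 1 ≤ n) (hd : 1 ≤ S.d n) : S.d n < S.d (n + 1) := by
  obtain rfl | hn2 := hn.eq_or_lt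
  · rw [S.hd1, S.hd2]
    exact one_lt_two
  · obtain ⟨k, ⟨hk, hk'⟩, -⟩ := (S.hφ n hn2).surjOn (show ((1 : ℤ), 1, 1, (1 : ℤ), 1) ∈ _ from
      ⟨Or.inl rfl, Or.inl rfl, le_rfl, hn2, le_rfl, S.hd1.ge, le_rfl, hd⟩)
    exact hk.trans_le hk'

theorem le_d {n : ℕ} (hn : 1 ≤ n) : n ≤ S.d n := by
  induction n, hn using Nat.le_induction with
  | base => exact S.hd1.ge
  | succ n hn ih => exact ih.trans_lt (S.d_lt_succ_of_one_le_d hn (hn.trans ih))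

theorem d_lt_succ {n : ℕ} (hn : 1 ≤ n) : S.d n < S.d (n + 1) :=
  S.d_lt_succ_of_one_le_d hn (hn.trans (S.le_d hn))

theorem d_mono {m n : ℕ} (hm : 1 ≤ m) (hmn : m ≤ n) : S.d m ≤ S.d n := by
  induction n, hmn using Nat.le_induction with
  | base => exact le_rfl
  | succ n hn ih => exact ih.trans (S.d_lt_succ (hm.trans hn)).le

theorem exists_level {k : ℕ} (hk : S.d 1 < k) : ∃ p ≥ 1, S.d p < k ∧ k ≤ S.d (p + 1) := by
  have hex : ∃ p, k ≤ S.d (p + 1) := ⟨k, k.le_succ.trans (S.le_d (by omega))⟩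
  have hpos : Nat.find hex ≠ 0 := fun h => (Nat.find_eq_zero hex).1 h |>.not_gt hk
  obtain ⟨p, hp⟩ := Nat.exists_eq_succ_of_ne_zero hpos
  have hle : k ≤ S.d (p + 1 + 1) := by
    have := Nat.find_spec hex
    rwa [hp] at this
  exact ⟨p + 1, by omega, not_le.1 (Nat.find_min hex (m := p) (by omega)), hle⟩

theorem pi_mem (m : ℕ) (x : linf) : S.pi m x ∈ Esub S.d m :=
  mem_Esub_iff.2 fun k hk => by rw [S.hpi, if_neg hk]

theorem pi_eq_self {m : ℕ} {x : linf} (hx : x ∈ Esub S.d m) : S.pi m x = x := by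
  refine linf_ext fun k => ?_
  rw [S.hpi]
  split_ifs with hk
  · rfl
  · exact (mem_Esub_iff.1 hx k hk).symm

theorem pi_congr {m : ℕ} {x y : linf} (h : ∀ k, 1 ≤ k → k ≤ S.d m → x k = y k) :
    S.pi m x = S.pi m y := by
  refine linf_ext fun k => ?_
  rw [S.hpi, S.hpi]
  split_ifs with hk
  · exact h k hk.1 hk.2
  · rfl

theorem iMap_succ_apply {n : ℕ} (hn : 1 ≤ n) {x : linf} (hx : x ∈ Esub S.d n) {k : ℕ}
    (hk : ¬ (S.d n < k ∧ k ≤ S.d (n + 1))) : S.iMap n (n + 1) x k = x k := by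
  obtain rfl | hn2 := hn.eq_or_lt
  · rw [S.hi12 x hx]
  · rw [S.histep n hn2 x hx, lp.coeFn_add, Pi.add_apply, sum_smul_ek_apply,
      if_neg (by rwa [Finset.mem_Ioc]), add_zero]

theorem iMap_succ_mem {n : ℕ} (hn : 1 ≤ n) {x : linf} (hx : x ∈ Esub S.d n) :
    S.iMap n (n + 1) x ∈ Esub S.d (n + 1) := by
  refine mem_Esub_iff.2 fun k hk => ?_
  have hd := S.d_lt_succ hn
  rw [S.iMap_succ_apply hn hx (by omega)]
  exact mem_Esub_iff.1 hx k (by omega)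

theorem iMap_mem {m n : ℕ} (hm : 1 ≤ m) (hmn : m < n) {x : linf} (hx : x ∈ Esub S.d m) :
    S.iMap m n x ∈ Esub S.d n := by
  induction n, Nat.succ_le_of_lt hmn using Nat.le_induction with
  | base => exact S.iMap_succ_mem hm hx
  | succ n hn ih =>
    rw [S.hicomp m n hm hn x hx]
    exact S.iMap_succ_mem (by omega) (ih hn)

theorem iMap_apply {m n : ℕ} (hm : 1 ≤ m) (hmn : m < n) {x : linf} (hx : x ∈ Esub S.d m)
    {k : ℕ} (hk : k ≤ S.d m) : S.iMap m n x k = x k := by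
  induction n, Nat.succ_le_of_lt hmn using Nat.le_induction with
  | base => exact S.iMap_succ_apply hm hx (by omega)
  | succ n hn ih =>
    have hkn : k ≤ S.d n := hk.trans (S.d_mono hm (by omega))
    rw [S.hicomp m n hm hn x hx, S.iMap_succ_apply (by omega) (S.iMap_mem hm hn hx) (by omega),
      ih hn]

theorem iMap_iMap {m n q : ℕ} (hm : 1 ≤ m) (hmn : m < n) (hnq : n < q) {x : linf}
    (hx : x ∈ Esub S.d m) : S.iMap n q (S.iMap m n x) = S.iMap m q x := by
  induction q, Nat.succ_le_of_lt hnq using Nat.le_induction with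
  | base => exact (S.hicomp m n hm hmn x hx).symm
  | succ q hq ih =>
    rw [S.hicomp n q (by omega) hq _ (S.iMap_mem hm hmn hx), ih hq,
      S.hicomp m q hm (by omega) x hx]

/-! ### The projections `P_m` -/

theorem P_apply_eq_iMap {m n : ℕ} (hm : 1 ≤ m) (hmn : m < n) (x : linf) {k : ℕ}
    (hk : k ≤ S.d n) : S.P m x k = S.iMap m n (S.pi m x) k := by
  refine tendsto_nhds_unique (S.hPlim m hm x k) (tendsto_const_nhds.congr' ?_)
  filter_upwards [eventually_gt_atTop n] with q hq
  rw [← S.iMap_iMap hm hmn hq (S.pi_mem m x),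
    S.iMap_apply (by omega) hq (S.iMap_mem hm hmn (S.pi_mem m x)) hk]

theorem P_apply_eq_pi {m : ℕ} (hm : 1 ≤ m) (x : linf) {k : ℕ} (hk : k ≤ S.d m) :
    S.P m x k = S.pi m x k := by
  rw [S.P_apply_eq_iMap hm m.lt_succ_self x (hk.trans (S.d_lt_succ hm).le),
    S.iMap_apply hm m.lt_succ_self (S.pi_mem m x) hk]

theorem P_apply {m : ℕ} (hm : 1 ≤ m) (x : linf) {k : ℕ} (hk1 : 1 ≤ k) (hk : k ≤ S.d m) :
    S.P m x k = x k := by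
  rw [S.P_apply_eq_pi hm x hk, S.hpi, if_pos ⟨hk1, hk⟩]

theorem P_congr {m : ℕ} (hm : 1 ≤ m) {x y : linf} (h : ∀ k, 1 ≤ k → k ≤ S.d m → x k = y k) :
    S.P m x = S.P m y := by
  refine linf_ext fun k => tendsto_nhds_unique (S.hPlim m hm x k) ?_
  rw [S.pi_congr h]
  exact S.hPlim m hm y k

theorem P_P_of_le {m n : ℕ} (hmn : m ≤ n) (x : linf) : S.P m (S.P n x) = S.P m x := by
  rcases Nat.eq_zero_or_pos m with rfl | hm
  · simp only [S.hP0, _root_.zero_apply]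
  · exact S.P_congr hm fun k hk1 hk =>
      S.P_apply (Nat.le_trans hm hmn) x hk1 (hk.trans (S.d_mono hm hmn))

theorem P_P_of_lt {m n : ℕ} (hmn : m < n) (x : linf) : S.P n (S.P m x) = S.P m x := by
  rcases Nat.eq_zero_or_pos m with rfl | hm
  · simp only [S.hP0, _root_.zero_apply, map_zero]
  have hmem := S.iMap_mem hm hmn (S.pi_mem m x)
  have hpi : S.pi n (S.P m x) = S.iMap m n (S.pi m x) := by
    rw [← S.pi_eq_self hmem]
    exact S.pi_congr fun j _ hj => S.P_apply_eq_iMap hm hmn x hj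
  refine linf_ext fun k => tendsto_nhds_unique (S.hPlim n (by omega) _ k) ?_
  refine (S.hPlim m hm x k).congr' ?_
  filter_upwards [eventually_gt_atTop n] with q hq
  rw [hpi, S.iMap_iMap hm hmn hq (S.pi_mem m x)]

theorem P_P (m n : ℕ) (x : linf) : S.P m (S.P n x) = S.P (min m n) x := by
  rcases le_or_gt m n with hmn | hnm
  · rw [min_eq_left hmn, S.P_P_of_le hmn]
  · rw [min_eq_right hnm.le, S.P_P_of_lt hnm]

theorem norm_P_apply_le (m : ℕ) (x : linf) : ‖S.P m x‖ ≤ S.lam * ‖x‖ :=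
  (S.P m).le_of_opNorm_le (S.hPnorm m) x

theorem exists_P_apply_eq {p k : ℕ} (hp : 2 ≤ p) (hk : S.d p < k) (hk' : k ≤ S.d (p + 1)) :
    ∃ (σ τ : ℝ) (i m j : ℕ), |σ| = 1 ∧ |τ| = 1 ∧
      ∀ x, S.P p x k = S.a * σ * S.P m x i + S.b * τ * (x - S.P m x) j := by
  obtain ⟨hσ, hτ, hm, hmp, hi, hi', hj, hj'⟩ := (S.hφ p hp).mapsTo (show k ∈ {k | _} from ⟨hk, hk'⟩)
  set σ := (S.φ k).1
  set i := (S.φ k).2.1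
  set m := (S.φ k).2.2.1
  set τ := (S.φ k).2.2.2.1
  set j := (S.φ k).2.2.2.2
  refine ⟨σ, τ, i, m, j, by rcases hσ with h | h <;> simp [h], by rcases hτ with h | h <;> simp [h],
    fun x => ?_⟩
  have hdm : S.d m ≤ S.d p := S.d_mono hm hmp.le
  have hpi : S.pi m (S.pi p x) = S.pi m x := S.pi_congr fun r hr hr' => by
    rw [S.hpi, if_pos ⟨hr, hr'.trans hdm⟩]
  have hpi_i : S.pi p x i = x i := by rw [S.hpi, if_pos ⟨hi, hi'.trans hdm⟩]
  have hpi_j : S.pi p x j = x j := by rw [S.hpi, if_pos ⟨hj, hj'⟩]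
  have hpi_k : S.pi p x k = 0 := by rw [S.hpi, if_neg (by omega)]
  rw [S.P_apply_eq_iMap (by omega) p.lt_succ_self x hk', S.histep p hp _ (S.pi_mem p x),
    lp.coeFn_add, Pi.add_apply, sum_smul_ek_apply, if_pos (Finset.mem_Ioc.2 ⟨hk, hk'⟩), hpi_k,
    zero_add, lp.coeFn_sub, Pi.sub_apply, lp.coeFn_sub, Pi.sub_apply, S.P_apply hm x hi hi',
    S.P_apply_eq_iMap hm hmp x hj', hpi_i, hpi_j, hpi]

theorem exists_abs_P_apply_le (k : ℕ) : ∃ p m, k ≤ S.d (p + 1) ∧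
    ∀ x, |S.P p x k| ≤ S.a * ‖S.P m x‖ + S.b * ‖x - S.P m x‖ := by
  have hb := S.hb
  have ha : 0 < S.a := hb.trans S.hba
  have of_eq_zero {p : ℕ} (h : ∀ x, S.P p x k = 0) (x : linf) :
      |S.P p x k| ≤ S.a * ‖S.P 0 x‖ + S.b * ‖x - S.P 0 x‖ := by
    rw [h, abs_zero]
    positivity
  rcases le_or_gt k (S.d 1) with hk1 | hk1
  · exact ⟨0, 0, hk1, of_eq_zero fun x => by rw [S.hP0]; rfl⟩
  obtain ⟨p, hp, hkp, hkp'⟩ := S.exists_level hk1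
  obtain rfl | hp2 := hp.eq_or_lt
  · refine ⟨1, 0, hkp', of_eq_zero fun x => ?_⟩
    rw [S.P_apply_eq_iMap le_rfl one_lt_two x hkp', S.hi12 _ (S.pi_mem 1 x), S.hpi,
      if_neg (by omega)]
  obtain ⟨σ, τ, i, m, j, hσ, hτ, hP⟩ := S.exists_P_apply_eq hp2 hkp hkp'
  refine ⟨p, m, hkp', fun x => ?_⟩
  calc |S.P p x k| ≤ |S.a * σ * S.P m x i| + |S.b * τ * (x - S.P m x) j| := by
        rw [hP]; exact abs_add_le _ _
    _ = S.a * |S.P m x i| + S.b * |(x - S.P m x) j| := by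
        simp only [abs_mul, hσ, hτ, mul_one, abs_of_pos ha, abs_of_pos hb]
    _ ≤ _ := by gcongr <;> exact abs_apply_le_norm _ _

/-! ### The decomposition of `X` -/

theorem P_mem_Xsub (m : ℕ) (x : linf) : S.P m x ∈ Xsub S := by
  rcases Nat.eq_zero_or_pos m with rfl | hm
  · simp only [S.hP0, _root_.zero_apply, Submodule.zero_mem]
  · refine Submodule.le_topologicalClosure _ (Submodule.subset_span (Set.mem_biUnion hm ?_))
    exact ⟨S.pi m x, S.pi_mem m x, S.P_congr hm fun k hk hk' => by rw [S.hpi, if_pos ⟨hk, hk'⟩]⟩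

/-- The projection `P_m` of `ℓ∞` as an operator on the Bourgain–Delbaen space `X`. These are the
partial sum projections of the finite-dimensional decomposition of `X`. -/
noncomputable def PX (m : ℕ) : Xsub S →L[ℝ] Xsub S :=
  ((S.P m).comp (Xsub S).subtypeL).codRestrict (Xsub S) fun x => S.P_mem_Xsub m x

theorem PX_PX (m n : ℕ) (x : Xsub S) : S.PX m (S.PX n x) = S.PX (min m n) x :=
  Subtype.ext (S.P_P m n x)

theorem norm_PX_le (m : ℕ) : ‖S.PX m‖ ≤ S.lam :=
  (S.PX m).opNorm_le_bound (zero_le_one.trans S.hlam.le) fun x => S.norm_P_apply_le m x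

theorem exists_P_eq_self {y : linf}
    (hy : y ∈ Submodule.span ℝ (⋃ m ∈ {m : ℕ | 1 ≤ m}, S.P m '' Esub S.d m)) :
    ∃ n, S.P n y = y := by
  induction hy using Submodule.span_induction with
  | mem x hx =>
    obtain ⟨m, -, z, -, rfl⟩ := Set.mem_iUnion₂.1 hx
    exact ⟨m, S.P_P_of_le le_rfl z⟩
  | zero => exact ⟨0, map_zero _⟩
  | add x y _ _ hx hy =>
    obtain ⟨m, hm⟩ := hx
    obtain ⟨n, hn⟩ := hy
    refine ⟨max m n, ?_⟩
    rw [map_add, ← hm, ← hn, S.P_P, S.P_P, min_eq_right (le_max_left m n),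
      min_eq_right (le_max_right m n)]
  | smul c x _ hx =>
    obtain ⟨n, hn⟩ := hx
    exact ⟨n, by rw [map_smul, hn]⟩

theorem dense_setOf_PX_eq_self : Dense {x | ∃ n, S.PX n x = x} := by
  refine Subtype.dense_iff.2 (closure_mono fun y hy => ?_)
  obtain ⟨n, hn⟩ := S.exists_P_eq_self hy
  exact ⟨⟨y, Submodule.le_topologicalClosure _ hy⟩, ⟨n, Subtype.ext hn⟩, rfl⟩

theorem Xsub_apply_zero (y : Xsub S) : (y : linf) 0 = 0 := by
  have hker : Xsub S ≤ (coordFn 0).ker := by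
    refine Submodule.topologicalClosure_minimal _ (Submodule.span_le.2 ?_)
      (coordFn 0).isClosed_ker
    refine Set.iUnion₂_subset fun m hm => ?_
    rintro _ ⟨z, -, rfl⟩
    exact (S.P_apply_eq_pi hm z (Nat.zero_le _)).trans (by rw [S.hpi, if_neg (by omega)])
  exact hker y.2

theorem PX_apply {m : ℕ} (hm : 1 ≤ m) (y : Xsub S) {k : ℕ} (hk : k ≤ S.d m) :
    (S.PX m y : linf) k = (y : linf) k := by
  rcases Nat.eq_zero_or_pos k with rfl | hk1
  · rw [S.Xsub_apply_zero, S.Xsub_apply_zero]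
  · exact S.P_apply hm y hk1 hk

theorem exists_abs_apply_le (k : ℕ) : ∃ p m, ∀ y : Xsub S, |(y : linf) k| ≤
    ‖S.PX (p + 1) y - S.PX p y‖ + S.a * ‖S.PX m y‖ + S.b * ‖y - S.PX m y‖ := by
  obtain ⟨p, m, hk, hP⟩ := S.exists_abs_P_apply_le k
  refine ⟨p, m, fun y => ?_⟩
  calc |(y : linf) k|
      = |(S.PX (p + 1) y - S.PX p y : Xsub S).1 k + S.P p y k| := by
        rw [← S.PX_apply (by omega : 1 ≤ p + 1) y hk]
        exact congrArg abs (sub_add_cancel _ _).symm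
    _ ≤ |(S.PX (p + 1) y - S.PX p y : Xsub S).1 k| + |S.P p y k| := abs_add_le _ _
    _ ≤ ‖S.PX (p + 1) y - S.PX p y‖ + (S.a * ‖S.PX m y‖ + S.b * ‖y - S.PX m y‖) :=
        add_le_add (abs_apply_le_norm _ _) (hP y)
    _ = _ := (add_assoc _ _ _).symm

/-! ### Block sums in `X` -/

section BlockSums

variable {S} {n : ℕ → ℕ} {x : ℕ → Xsub S} {D : ℝ}

theorem exists_abs_block_sum_apply_le (hx : IsBlockSequence S.PX n x)
    (hD : ∀ q l, ‖S.PX q (x l)‖ ≤ D) {u v : ℕ} (huv : u ≤ v) (k : ℕ) :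
    ∃ w ∈ Finset.Icc u v, |((∑ l ∈ Finset.Ico u v, x l : Xsub S) : linf) k| ≤
      S.a * (‖∑ l ∈ Finset.Ico u w, x l‖ + ‖∑ l ∈ Finset.Ico w v, x l‖) + 4 * D := by
  obtain ⟨p, m, hk⟩ := S.exists_abs_apply_le k
  obtain ⟨w, hw, hPm⟩ := hx.exists_norm_apply_sum_sub_sum_le S.PX_PX hD m huv
  obtain ⟨huw, hwv⟩ := Finset.mem_Icc.1 hw
  refine ⟨w, hw, ?_⟩
  set y := ∑ l ∈ Finset.Ico u v, x l
  set y₁ := ∑ l ∈ Finset.Ico u w, x l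
  set y₂ := ∑ l ∈ Finset.Ico w v, x l
  have hy : y = y₁ + y₂ := (Finset.sum_Ico_consecutive x huw hwv).symm
  have hp : ‖S.PX (p + 1) y - S.PX p y‖ ≤ 2 * D :=
    hx.norm_apply_succ_sub_apply_sum_le S.PX_PX hD p _
  have hy₁ : ‖S.PX m y‖ ≤ ‖y₁‖ + D := by
    linarith [norm_le_norm_add_norm_sub' (S.PX m y) y₁]
  have hy₂ : ‖y - S.PX m y‖ ≤ ‖y₂‖ + D := by
    have heq : y - S.PX m y = y₂ - (S.PX m y - y₁) := by rw [hy]; abel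
    rw [heq]
    linarith [norm_sub_le y₂ (S.PX m y - y₁)]
  have hD0 : 0 ≤ D := (norm_nonneg _).trans hPm
  have ha : 0 < S.a := S.hb.trans S.hba
  calc |(y : linf) k| ≤ ‖S.PX (p + 1) y - S.PX p y‖ + S.a * ‖S.PX m y‖ + S.b * ‖y - S.PX m y‖ :=
        hk y
    _ ≤ 2 * D + S.a * (‖y₁‖ + D) + S.a * (‖y₂‖ + D) := by
        gcongr
        exact S.hba.le
    _ = S.a * (‖y₁‖ + ‖y₂‖) + (2 * D + 2 * (S.a * D)) := by ring
    _ ≤ S.a * (‖y₁‖ + ‖y₂‖) + 4 * D := by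
        linarith [mul_le_of_le_one_left hD0 S.ha.le]

theorem exists_norm_block_sum_le (hx : IsBlockSequence S.PX n x)
    (hD : ∀ q l, ‖S.PX q (x l)‖ ≤ D) {u v : ℕ} (huv : u ≤ v) :
    ∃ w ∈ Finset.Icc u v, ‖∑ l ∈ Finset.Ico u v, x l‖ ≤
      S.a * (‖∑ l ∈ Finset.Ico u w, x l‖ + ‖∑ l ∈ Finset.Ico w v, x l‖) + 4 * D := by
  have hD0 : 0 ≤ D := (norm_nonneg _).trans (hD 0 0)
  have ha : 0 < S.a := S.hb.trans S.hba
  exact exists_mem_norm_le_of_forall_exists_abs_apply_le (fun w _ => by positivity)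
    (exists_abs_block_sum_apply_le hx hD huv)

theorem isLittleO_block_sums {M : ℝ} (hx : IsBlockSequence S.PX n x) (hM : ∀ l, ‖x l‖ ≤ M) :
    (fun N => ∑ l ∈ Finset.range N, x l) =o[atTop] (fun N : ℕ => (N : ℝ)) := by
  have hD : ∀ q l, ‖S.PX q (x l)‖ ≤ S.lam * M := fun q l =>
    ((S.PX q).le_of_opNorm_le (S.norm_PX_le q) (x l)).trans
      (mul_le_mul_of_nonneg_left (hM l) (zero_le_one.trans S.hlam.le))
  have hlinear : ∀ u v, u ≤ v → ‖∑ l ∈ Finset.Ico u v, x l‖ ≤ M * ↑(v - u) := fun u v _ =>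
    (norm_sum_le_of_le _ fun l _ => hM l).trans_eq (by simp [mul_comm])
  refine isLittleO_natCast_of_forall_exists_le fun ε hε => ?_
  obtain ⟨K, hK⟩ := exists_forall_le_mul_add_of_split (S.hb.trans S.hba).le S.ha hlinear
    (fun u v huv => exists_norm_block_sum_le hx hD huv) hε
  exact ⟨K, fun N => by simpa [Nat.Ico_zero_eq_range] using hK 0 N N.zero_le⟩

end BlockSums

/-! ### The functionals `Q e_k^*` -/

theorem tendsto_comp_PX (f : Xsub S →L[ℝ] ℝ) :
    Tendsto (fun m => f.comp (S.PX m)) atTop (nhds f) :=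
  tendsto_comp_of_isLittleO_block_sums S.PX_PX S.norm_PX_le S.dense_setOf_PX_eq_self
    (fun _ _ _ => isLittleO_block_sums) f

theorem comp_PX_mem_span (f : Xsub S →L[ℝ] ℝ) {m : ℕ} (hm : 1 ≤ m) :
    f.comp (S.PX m) ∈ Submodule.span ℝ {f | ∃ k : ℕ, 1 ≤ k ∧ f = Qe S k} := by
  let basis (k : ℕ) : Xsub S := ⟨S.P m (ek k), S.P_mem_Xsub m _⟩
  have hPX (x : Xsub S) : S.PX m x = ∑ k ∈ Finset.Icc 1 (S.d m), Qe S k x • basis k := by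
    refine Subtype.ext ?_
    calc S.P m x = S.P m (∑ k ∈ Finset.Icc 1 (S.d m), (x : linf) k • ek k) :=
          S.P_congr hm fun k hk hk' => by
            rw [sum_smul_ek_apply, if_pos (Finset.mem_Icc.2 ⟨hk, hk'⟩)]
      _ = ∑ k ∈ Finset.Icc 1 (S.d m), (x : linf) k • S.P m (ek k) := by
          simp only [map_sum, map_smul]
      _ = _ := by rw [Submodule.coe_sum]; rfl
  have hf : f.comp (S.PX m) = ∑ k ∈ Finset.Icc 1 (S.d m), f (basis k) • Qe S k := by
    ext x
    simp only [ContinuousLinearMap.comp_apply, hPX, map_sum, map_smul, _root_.sum_apply,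
      _root_.smul_apply, _root_.smul_eq_mul, mul_comm]
  rw [hf]
  refine Submodule.sum_mem _ fun k hk => Submodule.smul_mem _ _ (Submodule.subset_span ?_)
  exact ⟨k, (Finset.mem_Icc.1 hk).1, rfl⟩

theorem mem_closure_span_Qe (f : Xsub S →L[ℝ] ℝ) :
    f ∈ closure (Submodule.span ℝ {f | ∃ k : ℕ, 1 ≤ k ∧ f = Qe S k} : Set (Xsub S →L[ℝ] ℝ)) :=
  mem_closure_of_tendsto (S.tendsto_comp_PX f)
    ((eventually_ge_atTop 1).mono fun _ => S.comp_PX_mem_span f)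

theorem norm_Qe_le_one (k : ℕ) : ‖Qe S k‖ ≤ 1 :=
  (Qe S k).opNorm_le_bound zero_le_one fun x => by
    rw [one_mul]
    exact abs_apply_le_norm x k

theorem norm_sum_Qe_le_sum_abs (c : ℕ → ℝ) (s : Finset ℕ) :
    ‖∑ k ∈ s, c k • Qe S k‖ ≤ ∑ k ∈ s, |c k| :=
  norm_sum_smul_le_sum_norm (𝕜 := ℝ) (Y := Xsub S →L[ℝ] ℝ) c fun k _ => S.norm_Qe_le_one k

theorem exists_norm_le_Qe_eq {s : Finset ℕ} (hs : ∀ k ∈ s, 1 ≤ k) {c : ℕ → ℝ}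
    (hc : ∀ k, |c k| ≤ 1) : ∃ x : Xsub S, ‖x‖ ≤ S.lam ∧ ∀ k ∈ s, Qe S k x = c k := by
  have hm : 1 ≤ s.sup id + 1 := by omega
  let z : linf := ∑ k ∈ s, c k • ek k
  have hz : ‖z‖ ≤ 1 := by
    refine lp.norm_le_of_forall_le zero_le_one fun k => ?_
    rw [sum_smul_ek_apply]
    split_ifs
    · exact hc k
    · simp
  refine ⟨⟨S.P (s.sup id + 1) z, S.P_mem_Xsub _ z⟩, ?_, fun k hk => ?_⟩
  · exact (S.norm_P_apply_le _ z).trans (mul_le_of_le_one_right (zero_le_one.trans S.hlam.le) hz)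
  · have hkd : k ≤ S.d (s.sup id + 1) :=
      (Finset.le_sup (f := id) hk).trans ((Nat.le_succ _).trans (S.le_d hm))
    calc S.P (s.sup id + 1) z k = z k := S.P_apply hm z (hs k hk) hkd
      _ = c k := by rw [sum_smul_ek_apply, if_pos hk]

theorem inv_lam_mul_sum_abs_le_norm_sum_Qe (c : ℕ → ℝ) {s : Finset ℕ} (hs : ∀ k ∈ s, 1 ≤ k) :
    S.lam⁻¹ * ∑ k ∈ s, |c k| ≤ ‖∑ k ∈ s, c k • Qe S k‖ := by
  have hsign (r : ℝ) : |(SignType.sign r : ℝ)| ≤ 1 := by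
    rcases lt_trichotomy r 0 with h | h | h <;> simp [h]
  obtain ⟨x, hx, hQx⟩ := S.exists_norm_le_Qe_eq hs fun k => hsign (c k)
  rw [inv_mul_le_iff₀' (zero_lt_one.trans S.hlam)]
  exact sum_abs_le_norm_sum_smul_mul c (Qe S) hx hQx

end BDSetup

/-- Proposition 2.1: `(Q e_n^*)` is equivalent to the unit vector basis of
`ℓ₁` and its closed linear span is all of `X^*`. -/
theorem stmt_12 (S : BDSetup) :
    (∀ (c : ℕ → ℝ) (s : Finset ℕ), (∀ k ∈ s, 1 ≤ k) →
      S.lam⁻¹ * ∑ k ∈ s, |c k| ≤ ‖∑ k ∈ s, c k • Qe S k‖ ∧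
        ‖∑ k ∈ s, c k • Qe S k‖ ≤ ∑ k ∈ s, |c k|) ∧
    closure ((Submodule.span ℝ {f : (Xsub S) →L[ℝ] ℝ | ∃ k : ℕ, 1 ≤ k ∧ f = Qe S k} :
        Submodule ℝ ((Xsub S) →L[ℝ] ℝ)) : Set ((Xsub S) →L[ℝ] ℝ)) = Set.univ :=
  ⟨fun c _ hs => ⟨S.inv_lam_mul_sum_abs_le_norm_sum_Qe c hs, S.norm_sum_Qe_le_sum_abs c _⟩,
    Set.eq_univ_of_forall S.mem_closure_span_Qe⟩
end
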